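/- arXiv:1601.08073 — 5 statements merged into one kernel-verified Lean document; each statement's English description precedes it below -/
import Mathlib

section
/- (Existence, case (S₂)) Suppose there exist ρ₁,ρ₂,r₁,r₂ ∈ (0,∞) with ρ₁ < r₁ and ρ₂ < r₂ such that condition (I¹_{ρ₁,ρ₂}) holds and condition (I⁰_{r₁,r₂}) holds. Then the system (*) has at least one nontrivial solution in K. -/
open MeasureTheory Set

noncomputable def supNorm (w : ℝ → ℝ) : ℝ := ⨆ t : Set.Icc (0:ℝ) 1, |w t.1|

noncomputable def infOn (a b : ℝ) (w : ℝ → ℝ) : ℝ := ⨅ t : Set.Icc a b, w t.1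

/-- Membership in the cone `K ⊆ C[0,1] × C[0,1]`. -/
def inCone (a₁ b₁ c₁ a₂ b₂ c₂ : ℝ) (u v : ℝ → ℝ) : Prop :=
  ContinuousOn u (Set.Icc 0 1) ∧ ContinuousOn v (Set.Icc 0 1) ∧
    c₁ * supNorm u ≤ infOn a₁ b₁ u ∧ c₂ * supNorm v ≤ infOn a₂ b₂ v

/-- `(u, v)` solves the system of Hammerstein integral equations (*). -/
def isSolution (k₁ k₂ : ℝ → ℝ → ℝ) (f₁ f₂ : ℝ → ℝ → ℝ → ℝ) (u v : ℝ → ℝ) : Prop :=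
  (∀ t ∈ Set.Icc (0:ℝ) 1, u t = ∫ s in (0:ℝ)..1, k₁ t s * f₁ s (u s) (v s)) ∧
    (∀ t ∈ Set.Icc (0:ℝ) 1, v t = ∫ s in (0:ℝ)..1, k₂ t s * f₂ s (u s) (v s))

/-- `(u, v)` is a nontrivial solution of (*) lying in the cone. -/
def nontrivialSolution (k₁ k₂ : ℝ → ℝ → ℝ) (f₁ f₂ : ℝ → ℝ → ℝ → ℝ)
    (a₁ b₁ c₁ a₂ b₂ c₂ : ℝ) (u v : ℝ → ℝ) : Prop :=
  inCone a₁ b₁ c₁ a₂ b₂ c₂ u v ∧ isSolution k₁ k₂ f₁ f₂ u v ∧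
    0 < max (supNorm u) (supNorm v)

/-- Condition `(I¹_{ρ₁,ρ₂})`. -/
def condI1 (f₁ f₂ : ℝ → ℝ → ℝ → ℝ) (m₁ m₂ ρ₁ ρ₂ : ℝ) : Prop :=
  ∀ t ∈ Set.Icc (0:ℝ) 1, ∀ x ∈ Set.Icc (-ρ₁) ρ₁, ∀ y ∈ Set.Icc (-ρ₂) ρ₂,
    f₁ t x y < m₁ * ρ₁ ∧ f₂ t x y < m₂ * ρ₂

/-- Condition `(I⁰_{ρ₁,ρ₂})`. -/
def condI0 (f₁ f₂ : ℝ → ℝ → ℝ → ℝ) (a₁ b₁ c₁ a₂ b₂ c₂ M₁ M₂ ρ₁ ρ₂ : ℝ) : Prop :=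
  (∀ t ∈ Set.Icc a₁ b₁, ∀ x ∈ Set.Icc ρ₁ (ρ₁ / c₁), ∀ y ∈ Set.Icc (-(ρ₂ / c₂)) (ρ₂ / c₂),
      M₁ * ρ₁ < f₁ t x y) ∧
    (∀ t ∈ Set.Icc a₂ b₂, ∀ x ∈ Set.Icc (-(ρ₁ / c₁)) (ρ₁ / c₁), ∀ y ∈ Set.Icc ρ₂ (ρ₂ / c₂),
      M₂ * ρ₂ < f₂ t x y)

/-- Condition `(I⁰_{ρ₁,ρ₂})⋆`. -/
def condI0star (f₁ f₂ : ℝ → ℝ → ℝ → ℝ) (a₁ b₁ c₁ a₂ b₂ c₂ M₁ M₂ ρ₁ ρ₂ : ℝ) : Prop :=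
  (∀ t ∈ Set.Icc a₁ b₁, ∀ x ∈ Set.Icc 0 (ρ₁ / c₁), ∀ y ∈ Set.Icc (-(ρ₂ / c₂)) (ρ₂ / c₂),
      M₁ * ρ₁ < f₁ t x y) ∨
    (∀ t ∈ Set.Icc a₂ b₂, ∀ x ∈ Set.Icc (-(ρ₁ / c₁)) (ρ₁ / c₁), ∀ y ∈ Set.Icc 0 (ρ₂ / c₂),
      M₂ * ρ₂ < f₂ t x y)

/-!
On a cone `K` let `p` be a seminorm and `q ≤ p` a positively homogeneous functional with `{q ≤ 1}`
bounded in `p`. Suppose that a compact map `T` of `K` sends `{p = 1}` into `{p ≤ 1}` and that, on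
`{q = 1}`, the difference `x - T x` is never a nonnegative multiple of a fixed direction. Then `T`
has a fixed point with `1 ≤ p` and `q ≤ 1`: conjugation by the inversion `x ↦ p x ^ (-2) • x`
exchanges the two boundary conditions, which turns expansion into compression, and a radial
retraction reduces compression to Schauder's theorem. For the integral system `p` is the norm
`max (‖u‖ / ρ₁) (‖v‖ / ρ₂)` and `q` is the functional `max (min u / r₁) (min v / r₂)`, the minima
being over `[a₁, b₁]` and `[a₂, b₂]`; the cone inequality bounds `{q ≤ 1}`.

Schauder's theorem comes from Brouwer's by partitions of unity. For Brouwer's theorem, let `r` be a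
smooth retraction of the ball onto the sphere. The integral over the ball of the Jacobian of
`x ↦ x + t • (r x - x)` is a polynomial in `t`. For small `t` this map is a bijection of the ball,
so the integral is the volume, hence it is the volume also at `t = 1`, where the Jacobian vanishes.
-/

section VolumePolynomial

open Polynomial
open scoped NNReal

theorem bijective_id_add_of_lipschitzWith {E : Type*} [NormedAddCommGroup E] [CompleteSpace E]
    {h : E → E} {c : ℝ≥0} (hc : c < 1) (hh : LipschitzWith c h) :
    Function.Bijective fun x => x + h x := by
  refine (Function.bijective_iff_existsUnique _).2 fun y => ?_
  have hcontr : ContractingWith c fun x => y - h x := by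
    refine ⟨hc, fun x x' => ?_⟩
    simpa only [edist_sub_left] using hh x x'
  refine ⟨hcontr.fixedPoint, ?_, fun x hx => ?_⟩
  · exact (eq_sub_iff_add_eq.1 hcontr.fixedPoint_isFixedPt.symm)
  · exact hcontr.fixedPoint_unique (eq_sub_iff_add_eq.2 hx).symm

theorem image_id_add_of_lipschitzWith {E : Type*} [NormedAddCommGroup E] [CompleteSpace E]
    {h : E → E} {c : ℝ≥0} (hc : c < 1) (hh : LipschitzWith c h) {s : Set E}
    (hs : ∀ x ∉ s, h x = 0) : (fun x => x + h x) '' s = s := by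
  have hcompl : (fun x => x + h x) '' sᶜ = sᶜ := by
    rw [image_congr fun x hx => by rw [hs x hx, add_zero], image_id']
  rw [← compl_inj_iff, ← image_compl_eq (bijective_id_add_of_lipschitzWith hc hh), hcompl]

theorem inter_frontier_nonempty_of_isPreconnected {X : Type*} [TopologicalSpace X] {t s : Set X}
    (ht : IsPreconnected t) (hs : (t ∩ s).Nonempty) (hsc : (t ∩ sᶜ).Nonempty) :
    (t ∩ frontier s).Nonempty := by
  by_contra hempty
  have hsub : t ⊆ interior s ∪ interior sᶜ := by
    rw [← compl_frontier_eq_union_interior, subset_compl_iff_disjoint_right,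
      disjoint_iff_inter_eq_empty]
    exact not_nonempty_iff_eq_empty.1 hempty
  have hmeets : ∀ u : Set X, t ⊆ interior u ∪ interior uᶜ → (t ∩ u).Nonempty →
      (t ∩ interior u).Nonempty := fun u hu ⟨x, hxt, hxu⟩ =>
    ⟨x, hxt, (hu hxt).resolve_right fun hx => interior_subset hx hxu⟩
  obtain ⟨x, -, hx, hx'⟩ := ht _ _ isOpen_interior isOpen_interior hsub (hmeets s hsub hs)
    (hmeets sᶜ (by rwa [compl_compl, union_comm]) hsc)
  exact interior_subset hx' (interior_subset hx)

theorem lipschitzWith_indicator_of_eq_zero_frontier {E F : Type*} [NormedAddCommGroup E]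
    [NormedSpace ℝ E] [NormedAddCommGroup F] {f : E → F} {c : ℝ≥0} {s : Set E} (hs : IsClosed s)
    (hf : LipschitzOnWith c f s) (hf0 : ∀ x ∈ frontier s, f x = 0) :
    LipschitzWith c (s.indicator f) := by
  have hcross : ∀ x ∈ s, ∀ y ∉ s, dist (f x) 0 ≤ c * dist x y := fun x hx y hy => by
    obtain ⟨z, hz, hzs⟩ := inter_frontier_nonempty_of_isPreconnected
      (convex_segment x y).isPreconnected ⟨x, left_mem_segment ℝ x y, hx⟩
      ⟨y, right_mem_segment ℝ x y, hy⟩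
    calc dist (f x) 0 = dist (f x) (f z) := by rw [hf0 z hzs]
      _ ≤ c * dist x z := hf.dist_le_mul x hx z (hs.frontier_subset hzs)
      _ ≤ c * dist x y := by
        gcongr
        linarith [dist_add_dist_of_mem_segment hz, dist_nonneg (x := z) (y := y)]
  refine LipschitzWith.of_dist_le_mul fun x y => ?_
  by_cases hx : x ∈ s <;> by_cases hy : y ∈ s <;>
    simp only [hx, hy, indicator_of_mem, indicator_of_notMem, not_false_eq_true]
  · exact hf.dist_le_mul x hx y hy
  · exact hcross x hx y hy
  · rw [dist_comm, dist_comm x]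
    exact hcross y hy x hx
  · rw [dist_self]
    positivity

section

variable {E : Type*} [NormedAddCommGroup E] [NormedSpace ℝ E] [FiniteDimensional ℝ E]

theorem det_id_add_pos_of_norm_lt_one {A : E →L[ℝ] E} (hA : ‖A‖ < 1) :
    0 < (ContinuousLinearMap.id ℝ E + A).det := by
  have hne : ∀ t ∈ Icc (0 : ℝ) 1, (ContinuousLinearMap.id ℝ E + t • A).det ≠ 0 := by
    intro t ht hdet
    obtain ⟨x, hx, hx0⟩ :=
      (Submodule.ne_bot_iff _).1 (LinearMap.bot_lt_ker_of_det_eq_zero hdet).ne'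
    have hAx : x = -(t • A x) := eq_neg_of_add_eq_zero_left (by simpa using hx)
    refine lt_irrefl ‖x‖ ?_
    calc ‖x‖ = t * ‖A x‖ := by
          conv_lhs => rw [hAx, norm_neg, norm_smul, Real.norm_of_nonneg ht.1]
      _ ≤ 1 * (‖A‖ * ‖x‖) := by
          gcongr
          · exact ht.2
          · exact A.le_opNorm x
      _ < ‖x‖ := by
          rw [one_mul]
          exact mul_lt_of_lt_one_left (norm_pos_iff.2 hx0) hA
  have hcont : Continuous fun t : ℝ => (ContinuousLinearMap.id ℝ E + t • A).det :=
    ContinuousLinearMap.continuous_det.comp (by fun_prop)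
  by_contra! hneg
  obtain ⟨t, ht, hdet⟩ := intermediate_value_Icc' zero_le_one hcont.continuousOn
    (⟨by simpa using hneg, by simp [ContinuousLinearMap.det]⟩ : (0 : ℝ) ∈ Icc _ _)
  exact hne t ht hdet

theorem exists_polynomial_det_id_add_smul (A : E →L[ℝ] E) :
    ∃ q : ℝ[X], q.natDegree ≤ Module.finrank ℝ E ∧
      ∀ t : ℝ, (ContinuousLinearMap.id ℝ E + t • A).det = q.eval t := by
  let b := Module.finBasis ℝ E
  let M := LinearMap.toMatrix b b A
  refine ⟨Matrix.det ((X : ℝ[X]) • M.map C + (1 : Matrix _ _ ℝ).map C),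
    by simpa using natDegree_det_X_add_C_le M 1, fun t => ?_⟩
  have hmat : LinearMap.toMatrix b b (ContinuousLinearMap.id ℝ E + t • A : E →L[ℝ] E) =
      1 + t • M := by
    simp [M]
  rw [ContinuousLinearMap.det, ← LinearMap.det_toMatrix b, hmat, ← coe_evalRingHom,
    RingHom.map_det]
  congr 1
  ext i j
  simp only [Matrix.add_apply, Matrix.smul_apply, Matrix.one_apply, RingHom.mapMatrix_apply,
    Matrix.map_apply, map_add, smul_eq_mul, coe_evalRingHom, eval_mul, eval_X, eval_C]
  split_ifs <;> simp [add_comm]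

end

theorem exists_polynomial_integral_eval {α : Type*} [MeasurableSpace α] {μ : Measure α}
    {F : ℝ → α → ℝ} {n : ℕ} (hint : ∀ t, Integrable (F t) μ)
    (hpoly : ∀ x, ∃ q : ℝ[X], q.natDegree ≤ n ∧ ∀ t, F t x = q.eval t) :
    ∃ Q : ℝ[X], ∀ t, ∫ x, F t x ∂μ = Q.eval t := by
  set s := Finset.range (n + 1)
  set v : ℕ → ℝ := fun i => i
  have hinterp : ∀ t x, F t x = ∑ i ∈ s, F (v i) x * (Lagrange.basis s v i).eval t := by
    intro t x
    obtain ⟨q, hqn, hq⟩ := hpoly x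
    have hdeg : q.degree < s.card := by
      rw [Finset.card_range]
      exact degree_le_natDegree.trans_lt (by exact_mod_cast Nat.lt_succ_of_le hqn)
    rw [hq, Lagrange.eq_interpolate (fun i _ j _ hij => Nat.cast_injective hij) hdeg,
      Lagrange.interpolate_apply, eval_finsetSum]
    simp [hq, v]
  refine ⟨∑ i ∈ s, C (∫ x, F (v i) x ∂μ) * Lagrange.basis s v i, fun t => ?_⟩
  simp only [hinterp t, eval_finsetSum, eval_mul, eval_C]
  rw [integral_finsetSum _ fun i _ => (hint _).mul_const _]
  simp only [integral_mul_const]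

section

variable {E : Type*} [NormedAddCommGroup E] [NormedSpace ℝ E] [FiniteDimensional ℝ E]
  [MeasurableSpace E] [BorelSpace E] (μ : Measure E) [μ.IsAddHaarMeasure]

theorem setIntegral_det_id_add_of_lipschitzWith {h : E → E} {h' : E → E →L[ℝ] E} {c : ℝ≥0}
    (hc : c < 1) (hh : LipschitzWith c h) {s : Set E} (hs : MeasurableSet s)
    (hs0 : ∀ x ∉ s, h x = 0) (hh' : ∀ x ∈ s, HasFDerivAt h (h' x) x) :
    ∫ x in s, (ContinuousLinearMap.id ℝ E + h' x).det ∂μ = μ.real s := by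
  have := FiniteDimensional.complete ℝ E
  have hchange := integral_image_eq_integral_abs_det_fderiv_smul μ hs
    (fun x hx => ((hasFDerivAt_id x).add (hh' x hx)).hasFDerivWithinAt)
    (bijective_id_add_of_lipschitzWith hc hh).injective.injOn fun _ => (1 : ℝ)
  rw [show (id + h) '' s = s from image_id_add_of_lipschitzWith hc hh hs0] at hchange
  rw [← mul_one (μ.real s), ← smul_eq_mul, ← setIntegral_const, hchange]
  refine setIntegral_congr_fun hs fun x hx => ?_
  have hnorm : ‖h' x‖ < 1 := ((hh' x hx).le_of_lipschitz hh).trans_lt hc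
  simp [abs_of_pos (det_id_add_pos_of_norm_lt_one hnorm)]

-- The left side is polynomial in `t` when `g` is replaced by `t • g`, and for small `t` the map
-- `x ↦ x + t • g x` is a bijection of `s`.
theorem setIntegral_det_id_add_fderiv_of_eq_zero_frontier {g : E → E} {s U : Set E}
    (hs : IsOpen s) (hsc : IsCompact (closure s)) (hU : IsOpen U) (hsU : closure s ⊆ U)
    (hg : ContDiffOn ℝ 1 g U) (hg0 : ∀ x ∈ frontier s, g x = 0) :
    ∫ x in s, (ContinuousLinearMap.id ℝ E + fderiv ℝ g x).det ∂μ = μ.real s := by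
  have hder : ∀ x ∈ U, HasFDerivAt g (fderiv ℝ g x) x := fun x hx =>
    ((hg.differentiableOn one_ne_zero).differentiableAt (hU.mem_nhds hx)).hasFDerivAt
  obtain ⟨c, hlip⟩ : ∃ c, LipschitzOnWith c g (closure s) := by
    refine LocallyLipschitzOn.exists_lipschitzOnWith_of_compact hsc fun x hx => ?_
    obtain ⟨c, t, ht, hct⟩ := (hg.contDiffAt (hU.mem_nhds (hsU hx))).exists_lipschitzOnWith
    exact ⟨c, t, mem_nhdsWithin_of_mem_nhds ht, hct⟩
  have hlip' : LipschitzWith c ((closure s).indicator g) :=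
    lipschitzWith_indicator_of_eq_zero_frontier isClosed_closure hlip
      fun x hx => hg0 x (frontier_closure_subset hx)
  have hsmall : ∀ t : ℝ, ‖t‖₊ * c < 1 →
      ∫ x in s, (ContinuousLinearMap.id ℝ E + t • fderiv ℝ g x).det ∂μ = μ.real s := by
    intro t ht
    refine setIntegral_det_id_add_of_lipschitzWith μ ht ((lipschitzWith_smul t).comp hlip')
      hs.measurableSet (fun x hx => ?_) fun x hx => ?_
    · by_cases hx' : x ∈ closure s
      · simp [hx', hg0 x (hs.frontier_eq ▸ ⟨hx', hx⟩)]
      · simp [hx']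
    · refine ((hder x (hsU (subset_closure hx))).congr_of_eventuallyEq ?_).const_smul t
      filter_upwards [hs.mem_nhds hx] with y hy using indicator_of_mem (subset_closure hy) g
  have hint : ∀ t : ℝ, IntegrableOn
      (fun x => (ContinuousLinearMap.id ℝ E + t • fderiv ℝ g x).det) s μ := fun t =>
    (ContinuousLinearMap.continuous_det.comp_continuousOn (continuousOn_const.add
      (((hg.continuousOn_fderiv_of_isOpen hU le_rfl).mono hsU).const_smul t))
      |>.integrableOn_compact hsc).mono_set subset_closure
  obtain ⟨Q, hQ⟩ := exists_polynomial_integral_eval hint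
    fun x => exists_polynomial_det_id_add_smul (fderiv ℝ g x)
  have hQconst : Q = C (μ.real s) := by
    have hnhds : {t : ℝ | ‖t‖₊ * c < 1} ∈ nhds 0 :=
      (isOpen_lt (by fun_prop) continuous_const).mem_nhds (by simp)
    refine eq_of_infinite_eval_eq _ _ ((infinite_of_mem_nhds 0 hnhds).mono fun t ht => ?_)
    simpa only [mem_ofPred_eq, eval_C, ← hQ] using hsmall t ht
  simpa [hQconst] using hQ 1

end

end VolumePolynomial

section Brouwer

open Filter Metric
open scoped Topology RealInnerProductSpace

theorem exists_fixedPoint_of_forall_dist_le {X : Type*} [MetricSpace X] {f : X → X} {s Q : Set X}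
    (hs : IsClosed s) (hQ : IsCompact Q) (hf : ContinuousOn f s) (hfQ : MapsTo f s Q)
    (happrox : ∀ ε > 0, ∃ x ∈ s, dist (f x) x ≤ ε) : ∃ x ∈ s, f x = x := by
  choose x hxs hx using fun n : ℕ => happrox (1 / ((n : ℝ) + 1)) Nat.one_div_pos_of_nat
  obtain ⟨y, -, σ, hσ, hfx⟩ := hQ.tendsto_subseq fun n => hfQ (hxs n)
  have hdist : Tendsto (fun n => dist (f (x (σ n))) (x (σ n))) atTop (𝓝 0) :=
    (squeeze_zero (fun _ => dist_nonneg) hx tendsto_one_div_add_atTop_nhds_zero_nat).comp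
      hσ.tendsto_atTop
  have hlim : Tendsto (x ∘ σ) atTop (𝓝 y) := (tendsto_iff_of_dist hdist).1 hfx
  have hys : y ∈ s := hs.mem_of_tendsto hlim (Eventually.of_forall fun n => hxs (σ n))
  have hfy : Tendsto (f ∘ x ∘ σ) atTop (𝓝 (f y)) :=
    (hf y hys).tendsto.comp (tendsto_nhdsWithin_iff.2 ⟨hlim, Eventually.of_forall fun n => hxs _⟩)
  exact ⟨y, hys, tendsto_nhds_unique hfy hfx⟩

variable {E : Type*} [NormedAddCommGroup E] [InnerProductSpace ℝ E]

section Ray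

/-- A quarter of the discriminant of the quadratic equation `‖x + t • v‖ ^ 2 = 1` in `t`. -/
noncomputable def sphereDiscr (x v : E) : ℝ :=
  ⟪x, v⟫ ^ 2 + ‖v‖ ^ 2 * (1 - ‖x‖ ^ 2)

/-- The larger root `t` of `‖x + t • v‖ ^ 2 = 1`: the time at which the ray from `x` in the
direction `v` leaves the unit ball. -/
noncomputable def sphereExitTime (x v : E) : ℝ :=
  (√(sphereDiscr x v) - ⟪x, v⟫) / ‖v‖ ^ 2

theorem ne_zero_of_sphereDiscr_pos {x v : E} (h : 0 < sphereDiscr x v) : v ≠ 0 := by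
  rintro rfl
  simp [sphereDiscr] at h

theorem norm_add_sphereExitTime_smul {x v : E} (h : 0 < sphereDiscr x v) :
    ‖x + sphereExitTime x v • v‖ = 1 := by
  have hv : ‖v‖ ^ 2 ≠ 0 := by simpa using ne_zero_of_sphereDiscr_pos h
  have hroot : (sphereExitTime x v * ‖v‖ ^ 2 + ⟪x, v⟫) ^ 2 = sphereDiscr x v := by
    rw [sphereExitTime, div_mul_cancel₀ _ hv, sub_add_cancel, Real.sq_sqrt h.le]
  refine (sq_eq_sq₀ (norm_nonneg _) zero_le_one).1 (mul_left_cancel₀ hv ?_)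
  rw [norm_add_sq_real, inner_smul_right, norm_smul, mul_pow, Real.norm_eq_abs, sq_abs]
  rw [sphereDiscr] at hroot
  linear_combination hroot

theorem sphereExitTime_eq_zero {x v : E} (hx : ‖x‖ = 1) (hxv : 0 ≤ ⟪x, v⟫) :
    sphereExitTime x v = 0 := by
  simp [sphereExitTime, sphereDiscr, hx, Real.sqrt_sq hxv]

theorem inner_self_sub_pos_of_norm_lt {x y : E} (h : ‖y‖ < ‖x‖) : 0 < ⟪x, x - y⟫ := by
  rw [inner_sub_right, real_inner_self_eq_norm_sq, sub_pos, sq]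
  exact (real_inner_le_norm x y).trans_lt
    (mul_lt_mul_of_pos_left h ((norm_nonneg y).trans_lt h))

theorem sphereDiscr_sub_pos {x y : E} (hx : ‖x‖ ≤ 1) (hy : ‖y‖ < 1) (hxy : x ≠ y) :
    0 < sphereDiscr x (x - y) := by
  have hv : 0 < ‖x - y‖ := norm_sub_pos_iff.2 hxy
  rcases hx.lt_or_eq with hx | hx
  · have : 0 < 1 - ‖x‖ ^ 2 := by nlinarith [norm_nonneg x]
    rw [sphereDiscr]
    positivity
  · have : 0 < ⟪x, x - y⟫ := inner_self_sub_pos_of_norm_lt (hx.symm ▸ hy)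
    rw [sphereDiscr, hx]
    simpa using pow_pos this 2

theorem contDiff_sphereDiscr {n : WithTop ℕ∞} :
    ContDiff ℝ n fun z : E × E => sphereDiscr z.1 z.2 :=
  ((contDiff_fst.inner ℝ contDiff_snd).pow 2).add
    ((contDiff_snd.norm_sq ℝ).mul (contDiff_const.sub (contDiff_fst.norm_sq ℝ)))

theorem contDiffOn_sphereExitTime {n : WithTop ℕ∞} :
    ContDiffOn ℝ n (fun z : E × E => sphereExitTime z.1 z.2) {z | 0 < sphereDiscr z.1 z.2} :=
  ((contDiff_sphereDiscr.contDiffOn.sqrt fun _ hz => ne_of_gt hz).sub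
    (contDiff_fst.inner ℝ contDiff_snd).contDiffOn).div (contDiff_snd.norm_sq ℝ).contDiffOn
    fun _ hz => by simpa using ne_zero_of_sphereDiscr_pos hz

end Ray

section

variable [FiniteDimensional ℝ E]

theorem det_eq_zero_of_norm_eventually_eq_one {r : E → E} {A : E →L[ℝ] E} {x : E}
    (hr : HasFDerivAt r A x) (hr1 : ∀ᶠ y in 𝓝 x, ‖r y‖ = 1) : A.det = 0 := by
  by_contra hdet
  have hsurj : Function.Surjective A := LinearMap.range_eq_top.1 <|
    (LinearMap.isUnit_iff_range_eq_top _).1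
      ((LinearMap.isUnit_iff_isUnit_det _).2 (isUnit_iff_ne_zero.2 hdet))
  obtain ⟨v, hv⟩ := hsurj (r x)
  have hconst : HasFDerivAt (fun y => ‖r y‖ ^ 2) (0 : E →L[ℝ] ℝ) x :=
    (hasFDerivAt_const (1 : ℝ) x).congr_of_eventuallyEq (hr1.mono fun y hy => by simp [hy])
  have horth : 2 * ⟪r x, A v⟫ = 0 := by
    simpa using DFunLike.congr_fun (hr.norm_sq.unique hconst) v
  rw [hv, real_inner_self_eq_norm_sq, hr1.self_of_nhds] at horth
  norm_num at horth

theorem not_mapsTo_sphere_of_eq_id_sphere {r : E → E} {U : Set E} (hU : IsOpen U)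
    (hBU : closedBall 0 1 ⊆ U) (hr : ContDiffOn ℝ 1 r U) (hr_id : ∀ x ∈ sphere 0 1, r x = x) :
    ¬ MapsTo r (closedBall 0 1) (sphere 0 1) := by
  intro hmaps
  borelize E
  have hcl : closure (ball (0 : E) 1) = closedBall 0 1 := closure_ball 0 one_ne_zero
  have hvol := setIntegral_det_id_add_fderiv_of_eq_zero_frontier volume (g := fun x => r x - x)
    (isOpen_ball (x := (0 : E)) (ε := 1)) (hcl ▸ isCompact_closedBall 0 1) hU (hcl ▸ hBU)
    (hr.sub contDiffOn_id) fun x hx => by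
      rw [hr_id x (by rwa [frontier_ball 0 one_ne_zero] at hx), sub_self]
  have hdet : ∀ x ∈ ball (0 : E) 1,
      (ContinuousLinearMap.id ℝ E + fderiv ℝ (fun x => r x - x) x).det = 0 := fun x hx => by
    have hrx : DifferentiableAt ℝ r x := (hr.differentiableOn one_ne_zero).differentiableAt
      (hU.mem_nhds (hBU (ball_subset_closedBall hx)))
    rw [fderiv_fun_sub hrx differentiableAt_fun_id, fderiv_fun_id, add_sub_cancel]
    refine det_eq_zero_of_norm_eventually_eq_one hrx.hasFDerivAt ?_
    filter_upwards [isOpen_ball.mem_nhds hx] with y hy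
    simpa using hmaps (ball_subset_closedBall hy)
  rw [setIntegral_eq_zero_of_forall_eq_zero hdet] at hvol
  exact (ENNReal.toReal_pos (measure_ball_pos volume (0 : E) one_pos).ne'
    measure_ball_lt_top.ne).ne hvol

-- Otherwise, following the ray from `p x` through `x` up to the unit sphere is a retraction.
theorem exists_fixedPoint_of_contDiff {p : E → E} (hp : ContDiff ℝ 1 p)
    (hp1 : MapsTo p (closedBall 0 1) (ball 0 1)) : ∃ x ∈ closedBall 0 1, p x = x := by
  by_contra! hne
  set U := {x | 0 < sphereDiscr x (x - p x)}
  have hpair : ContDiff ℝ 1 fun x => (x, x - p x) := contDiff_id.prodMk (contDiff_id.sub hp)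
  have hpos : ∀ x ∈ closedBall (0 : E) 1, 0 < sphereDiscr x (x - p x) := fun x hx =>
    sphereDiscr_sub_pos (by simpa using hx) (by simpa using hp1 hx) (hne x hx).symm
  refine not_mapsTo_sphere_of_eq_id_sphere (U := U)
    (r := fun x => x + sphereExitTime x (x - p x) • (x - p x)) ?_ hpos ?_ ?_ ?_
  · exact isOpen_lt continuous_const (contDiff_sphereDiscr.comp hpair).continuous
  · exact contDiffOn_id.add ((contDiffOn_sphereExitTime.comp hpair.contDiffOn fun x hx => hx).smul
      (contDiff_id.sub hp).contDiffOn)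
  · intro x hx
    have hx1 : ‖x‖ = 1 := by simpa using hx
    have hlt : ‖p x‖ < ‖x‖ := by simpa [hx1] using hp1 (sphere_subset_closedBall hx)
    rw [sphereExitTime_eq_zero hx1 (inner_self_sub_pos_of_norm_lt hlt).le, zero_smul,
      add_zero]
  · intro x hx
    simpa using norm_add_sphereExitTime_smul (hpos x hx)

theorem exists_fixedPoint_of_mapsTo_closedBall {f : E → E} (hf : Continuous f)
    (hf1 : MapsTo f (closedBall 0 1) (closedBall 0 1)) : ∃ x ∈ closedBall 0 1, f x = x := by
  refine exists_fixedPoint_of_forall_dist_le isClosed_closedBall (isCompact_closedBall 0 1)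
    hf.continuousOn hf1 fun ε hε => ?_
  obtain ⟨q, hqc, hq, -⟩ := hf.exists_contDiff_approx 1 (ε := fun _ => ε / 2) continuous_const
    fun _ => half_pos hε
  have hq1 : MapsTo (fun x => (1 + ε / 2)⁻¹ • q x) (closedBall 0 1) (ball 0 1) := fun x hx => by
    rw [mem_ball_zero_iff, norm_smul, norm_inv, Real.norm_of_nonneg (by positivity),
      inv_mul_lt_one₀ (by positivity)]
    have hfx : ‖f x‖ ≤ 1 := by simpa using hf1 hx
    have hqfx : ‖q x - f x‖ < ε / 2 := by simpa only [dist_eq_norm] using hq x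
    linarith [norm_le_norm_add_norm_sub' (q x) (f x)]
  obtain ⟨x, hx, hqx⟩ := exists_fixedPoint_of_contDiff (hqc.const_smul _) hq1
  rw [inv_smul_eq_iff₀ (by positivity)] at hqx
  refine ⟨x, hx, (dist_triangle _ (q x) _).trans ?_⟩
  have hqx' : dist (q x) x ≤ ε / 2 := by
    rw [hqx, dist_eq_norm, add_smul, one_smul, add_sub_cancel_left, norm_smul,
      Real.norm_of_nonneg (by positivity)]
    exact mul_le_of_le_one_right (by positivity) (by simpa using hx)
  linarith [dist_comm (f x) (q x), hq x]

end

end Brouwer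

section BrouwerConvex

open Metric
open scoped RealInnerProductSpace

theorem exists_lipschitzWith_one_retraction {E : Type*} [NormedAddCommGroup E]
    [InnerProductSpace ℝ E] {s : Set E} (hs : IsComplete s) (hconv : Convex ℝ s)
    (hne : s.Nonempty) :
    ∃ P : E → E, LipschitzWith 1 P ∧ (∀ x, P x ∈ s) ∧ ∀ x ∈ s, P x = x := by
  choose P hPs hPmin using exists_norm_eq_iInf_of_complete_convex hne hs hconv
  have hobtuse : ∀ x, ∀ w ∈ s, ⟪x - P x, w - P x⟫ ≤ 0 := fun x =>
    (norm_eq_iInf_iff_real_inner_le_zero hconv (hPs x)).1 (hPmin x)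
  refine ⟨P, LipschitzWith.of_dist_le_mul fun x y => ?_, hPs, fun x hx => ?_⟩
  · have hsq : ‖P x - P y‖ ^ 2 ≤ ⟪x - y, P x - P y⟫ := by
      have hsplit : ⟪x - y, P x - P y⟫ - ‖P x - P y‖ ^ 2 =
          -⟪x - P x, P y - P x⟫ - ⟪y - P y, P x - P y⟫ := by
        rw [← real_inner_self_eq_norm_sq]
        simp only [inner_sub_left, inner_sub_right]
        ring
      linarith [hobtuse x _ (hPs y), hobtuse y _ (hPs x)]
    rw [dist_eq_norm, dist_eq_norm, NNReal.coe_one, one_mul]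
    nlinarith [real_inner_le_norm (x - y) (P x - P y), norm_nonneg (x - y),
      norm_nonneg (P x - P y)]
  · have := hobtuse x x hx
    rw [real_inner_self_eq_norm_sq] at this
    exact (sub_eq_zero.1 (by simpa using this.antisymm (sq_nonneg _))).symm

variable {E : Type*} [NormedAddCommGroup E] [InnerProductSpace ℝ E] [FiniteDimensional ℝ E]

theorem exists_fixedPoint_of_isCompact_convex {s : Set E} (hs : IsCompact s) (hconv : Convex ℝ s)
    (hne : s.Nonempty) {f : E → E} (hf : ContinuousOn f s) (hfs : MapsTo f s s) :
    ∃ x ∈ s, f x = x := by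
  obtain ⟨P, hP, hPs, hPid⟩ := exists_lipschitzWith_one_retraction hs.isComplete hconv hne
  obtain ⟨R, hR, hsR⟩ := hs.isBounded.exists_pos_norm_le
  have hfP : ∀ x, f (P x) ∈ s := fun x => hfs (hPs x)
  have hcont : Continuous fun x => R⁻¹ • f (P (R • x)) :=
    (((hf.comp_continuous hP.continuous hPs).comp (continuous_const_smul R)).const_smul _)
  obtain ⟨x, -, hx⟩ := exists_fixedPoint_of_mapsTo_closedBall hcont fun x _ => by
    rw [mem_closedBall_zero_iff, norm_smul, norm_inv, Real.norm_of_nonneg hR.le]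
    exact inv_mul_le_one_of_le₀ (hsR _ (hfP _)) hR.le
  rw [inv_smul_eq_iff₀ hR.ne'] at hx
  have hxs : R • x ∈ s := hx ▸ hfP _
  exact ⟨R • x, hxs, by rwa [hPid _ hxs] at hx⟩

theorem exists_fixedPoint_stdSimplex {ι : Type*} [Fintype ι] [Nonempty ι] {f : (ι → ℝ) → ι → ℝ}
    (hf : ContinuousOn f (stdSimplex ℝ ι)) (hfs : MapsTo f (stdSimplex ℝ ι) (stdSimplex ℝ ι)) :
    ∃ w ∈ stdSimplex ℝ ι, f w = w := by
  classical
  let e := EuclideanSpace.equiv ι ℝ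
  have hs : IsCompact (e ⁻¹' stdSimplex ℝ ι) :=
    e.toHomeomorph.isCompact_preimage.2 (isCompact_stdSimplex ℝ ι)
  have hconv : Convex ℝ (e ⁻¹' stdSimplex ℝ ι) :=
    (convex_stdSimplex ℝ ι).linear_preimage e.toLinearMap
  have hne : (e ⁻¹' stdSimplex ℝ ι).Nonempty :=
    ⟨e.symm (Pi.single (Classical.arbitrary ι) 1), by simp [single_mem_stdSimplex]⟩
  obtain ⟨x, hx, hfx⟩ := exists_fixedPoint_of_isCompact_convex hs hconv hne
    (f := fun x => e.symm (f (e x)))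
    (e.symm.continuous.comp_continuousOn (hf.comp e.continuous.continuousOn fun _ hx => hx))
    fun x hx => by simpa using hfs hx
  exact ⟨e x, hx, by simpa using congrArg e hfx⟩

end BrouwerConvex

section Schauder

open Metric

variable {E : Type*} [NormedAddCommGroup E] [NormedSpace ℝ E]

theorem exists_partitionOfUnity_dist_lt {K : Set E} (hK : IsCompact K) {ε : ℝ} (hε : 0 < ε) :
    ∃ (t : Finset E) (φ : PartitionOfUnity t E K), (∀ y ∈ t, y ∈ K) ∧
      ∀ x ∈ K, dist x (∑ y : t, φ y x • (y : E)) < ε := by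
  obtain ⟨t, htK, htfin, hcov⟩ := hK.finite_cover_balls hε
  lift t to Finset E using htfin
  obtain ⟨φ, hφ⟩ := PartitionOfUnity.exists_isSubordinate hK.isClosed
    (fun y : t => ball (y : E) ε) (fun _ => isOpen_ball) (by rwa [iUnion_subtype])
  refine ⟨t, φ, fun y hy => htK hy, fun x hx => ?_⟩
  rw [dist_comm, ← mem_ball, ← finsum_eq_sum_of_fintype]
  refine φ.finsum_smul_mem_convex (g := fun (y : t) _ => (y : E)) hx (fun y hy => ?_)
    (convex_ball x ε)
  rw [mem_ball']
  exact mem_ball.1 (hφ y (subset_tsupport _ hy))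

theorem exists_dist_le_of_convex_mapsTo_isCompact {C Q : Set E} (hC : Convex ℝ C)
    (hQ : IsCompact Q) (hQC : Q ⊆ C) (hQne : Q.Nonempty) {f : E → E} (hf : ContinuousOn f C)
    (hfQ : MapsTo f C Q) {ε : ℝ} (hε : 0 < ε) : ∃ x ∈ C, dist (f x) x ≤ ε := by
  obtain ⟨t, φ, htQ, hφ⟩ := exists_partitionOfUnity_dist_lt hQ hε
  let σ : (t → ℝ) → E := fun w => ∑ y : t, w y • (y : E)
  have hσC : MapsTo σ (stdSimplex ℝ t) C := fun w hw =>
    hC.sum_mem (fun y _ => hw.1 y) hw.2 fun y _ => hQC (htQ y y.2)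
  have hσ : Continuous σ := by fun_prop
  have : Nonempty t := by
    obtain ⟨x, hx⟩ := hQne
    obtain ⟨y, -⟩ := φ.exists_pos hx
    exact ⟨y⟩
  obtain ⟨w, hw, hfix⟩ := exists_fixedPoint_stdSimplex (f := fun w y => φ y (f (σ w)))
    (continuousOn_pi.2 fun y => (φ y).continuous.comp_continuousOn
      (hf.comp hσ.continuousOn hσC))
    fun w hw => ⟨fun y => φ.nonneg y _, by
      rw [← finsum_eq_sum_of_fintype]; exact φ.sum_eq_one (hfQ (hσC hw))⟩
  refine ⟨σ w, hσC hw, ?_⟩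
  have hσw : ∑ y : t, φ y (f (σ w)) • (y : E) = σ w := by
    conv_rhs => rw [← hfix]
  simpa only [hσw] using (hφ _ (hfQ (hσC hw))).le

theorem exists_fixedPoint_of_convex_mapsTo_isCompact {C Q : Set E} (hC : Convex ℝ C)
    (hCcl : IsClosed C) (hCne : C.Nonempty) (hQ : IsCompact Q) {f : E → E}
    (hf : ContinuousOn f C) (hfC : MapsTo f C C) (hfQ : MapsTo f C Q) : ∃ x ∈ C, f x = x := by
  obtain ⟨x₀, hx₀⟩ := hCne
  have hfCQ : MapsTo f C (C ∩ Q) := fun x hx => ⟨hfC hx, hfQ hx⟩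
  have hCQ : IsCompact (C ∩ Q) := hQ.inter_left hCcl
  exact exists_fixedPoint_of_forall_dist_le hCcl hCQ hf hfCQ fun ε hε =>
    exists_dist_le_of_convex_mapsTo_isCompact hC hCQ inter_subset_left
      ⟨f x₀, hfCQ hx₀⟩ hf hfCQ hε

end Schauder

section ConeFixedPoint

open scoped Pointwise

variable {E : Type*} [NormedAddCommGroup E] [NormedSpace ℝ E] {K : ProperCone ℝ E}
  {p : Seminorm ℝ E} {q : E → ℝ} {Q : Set E} {e : E} {R : ℝ}

theorem exists_eq_smul_or_fixedPoint_of_mapsTo_isCompact (hp : Continuous p) (hQ : IsCompact Q)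
    {G : E → E} (hG : ContinuousOn G {x | x ∈ K ∧ p x ≤ 1})
    (hGK : ∀ x ∈ K, p x ≤ 1 → G x ∈ K) (hGQ : ∀ x ∈ K, p x ≤ 1 → G x ∈ Q) :
    ∃ x ∈ K, p x ≤ 1 ∧ (G x = x ∨ p x = 1 ∧ ∃ a > (1 : ℝ), G x = a • x) := by
  have hone (x) : 0 < max 1 (p (G x)) := one_pos.trans_le (le_max_left _ _)
  have hconv : Convex ℝ {x | x ∈ K ∧ p x ≤ 1} := by
    have h := K.convex.inter (p.convex_closedBall 0 1)
    rwa [Seminorm.closedBall_zero_eq] at h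
  obtain ⟨x, ⟨hxK, hx1⟩, hx⟩ := exists_fixedPoint_of_convex_mapsTo_isCompact
    (f := fun x => (max 1 (p (G x)))⁻¹ • G x) hconv
    (K.isClosed.inter (isClosed_le hp continuous_const))
    ⟨0, K.zero_mem, by simp⟩ (isCompact_Icc.smul_set hQ : IsCompact (Icc (0 : ℝ) 1 • Q))
    (((continuousOn_const.sup' (hp.comp_continuousOn hG)).inv₀ fun x _ => (hone x).ne').smul hG)
    (fun x hx => ⟨K.smul_mem (hGK x hx.1 hx.2) (inv_nonneg.2 (hone x).le), by
      rw [map_smul_eq_mul, Real.norm_of_nonneg (inv_nonneg.2 (hone x).le), inv_mul_le_one₀ (hone x)]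
      exact le_max_right _ _⟩)
    (fun x hx => smul_mem_smul ⟨inv_nonneg.2 (hone x).le, inv_le_one_of_one_le₀ (le_max_left _ _)⟩
      (hGQ x hx.1 hx.2))
  refine ⟨x, hxK, hx1, ?_⟩
  rcases le_or_gt (p (G x)) 1 with h | h
  · left
    simpa only [max_eq_left h, inv_one, one_smul] using hx
  · right
    simp only [max_eq_right h.le] at hx
    have hGx : G x = p (G x) • x := by
      rw [← inv_smul_eq_iff₀ (one_pos.trans h).ne', hx]
    refine ⟨?_, _, h, hGx⟩
    rw [← hx, map_smul_eq_mul, Real.norm_of_nonneg (by positivity), inv_mul_cancel₀ (by positivity)]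

theorem exists_fixedPoint_of_cone_compression (hp : Continuous p) (hQ : IsCompact Q)
    {S : E → E} (hS : ContinuousOn S {x | x ∈ K ∧ p x ≤ 1})
    (hSK : ∀ x ∈ K, p x ≤ 1 → S x ∈ K) (hSQ : ∀ x ∈ K, p x ≤ 1 → S x ∈ Q)
    (he : e ∈ K) (hR : 1 ≤ R)
    (houter : ∀ x ∈ K, p x = 1 → ∀ a > (1 : ℝ), S x ≠ a • x)
    (hinner : ∀ x ∈ K, R * p x < 1 → ∀ l > (0 : ℝ), S x + l • e ≠ x) :
    ∃ x ∈ K, p x ≤ 1 ∧ 1 ≤ R * p x ∧ S x = x := by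
  have hl0 (x) : 0 ≤ max (1 - R * p x) 0 := le_max_right _ _
  have hl1 (x) : max (1 - R * p x) 0 ≤ 1 :=
    max_le (by linarith [mul_nonneg (zero_le_one.trans hR) (apply_nonneg p x)]) zero_le_one
  obtain ⟨x, hxK, hx1, hx⟩ := exists_eq_smul_or_fixedPoint_of_mapsTo_isCompact
    (K := K) (G := fun x => S x + max (1 - R * p x) 0 • e) hp
    (hQ.add (isCompact_Icc.smul_set isCompact_singleton : IsCompact (Icc (0 : ℝ) 1 • {e})))
    (hS.add (Continuous.continuousOn (by fun_prop)))
    (fun x hx h1 => K.add_mem (hSK x hx h1) (K.smul_mem he (hl0 x)))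
    (fun x hx h1 => add_mem_add (hSQ x hx h1) (smul_mem_smul ⟨hl0 x, hl1 x⟩ rfl))
  have hR_le : 1 ≤ R * p x := by
    by_contra! h
    refine hinner x hxK h _ (lt_max_of_lt_left (sub_pos.2 h)) (hx.resolve_right fun h1 => ?_)
    rw [h1.1, mul_one] at h
    exact h.not_ge hR
  simp only [max_eq_right (sub_nonpos.2 hR_le), zero_smul, add_zero] at hx
  exact ⟨x, hxK, hx1, hR_le, hx.resolve_right fun ⟨h1, a, ha, h⟩ => houter x hxK h1 a ha h⟩

/-- The factor by which `x ↦ (inversionScale p q x)⁻¹ • x` contracts: this map is the inversion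
`x ↦ p x ^ (-2) • x` in the sphere `p = 1` wherever the image lies in `{q ≤ 1}`, and the radial
projection to `{q = 1}` elsewhere. -/
def inversionScale (p : Seminorm ℝ E) (q : E → ℝ) (x : E) : ℝ := max (p x ^ 2) (q x)

theorem continuous_inversionScale (hp : Continuous p) (hq : Continuous q) :
    Continuous (inversionScale p q) := by
  unfold inversionScale
  fun_prop

theorem inversionScale_nonneg (x : E) : 0 ≤ inversionScale p q x :=
  (sq_nonneg _).trans (le_max_left _ _)

theorem inversionScale_pos {x : E} (hx : 0 < p x) : 0 < inversionScale p q x :=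
  (pow_pos hx 2).trans_le (le_max_left _ _)

theorem inversionScale_le_one {x : E} (hqp : q x ≤ p x) (hx : p x ≤ 1) :
    inversionScale p q x ≤ 1 :=
  max_le (pow_le_one₀ (apply_nonneg p x) hx) (hqp.trans hx)

theorem inversionScale_eq_one {x : E} (hqp : q x ≤ p x) (hx : p x = 1) :
    inversionScale p q x = 1 := by
  rw [inversionScale, hx, one_pow, max_eq_left (hqp.trans_eq hx)]

theorem apply_inv_inversionScale_smul_le_one (hq : ∀ a : ℝ, 0 ≤ a → ∀ x, q (a • x) = a * q x)
    (x : E) : q ((inversionScale p q x)⁻¹ • x) ≤ 1 := by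
  have h0 := inversionScale_nonneg (p := p) (q := q) x
  rw [hq _ (inv_nonneg.2 h0)]
  exact inv_mul_le_one_of_le₀ (le_max_right _ _) h0

theorem apply_inv_sq_smul {x : E} : p ((p x ^ 2)⁻¹ • x) = (p x)⁻¹ := by
  rw [map_smul_eq_mul, Real.norm_of_nonneg (by positivity), pow_two, mul_inv]
  rcases eq_or_ne (p x) 0 with h | h
  · simp [h]
  · rw [mul_assoc, inv_mul_cancel₀ h, mul_one]

theorem continuousOn_smul_of_norm_le {X : Type*} [TopologicalSpace X] {s : Set X} {a : X → ℝ}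
    {g : X → E} {N : ℝ} (ha : ContinuousOn a s) (hg : ContinuousOn g {x ∈ s | a x ≠ 0})
    (hN : ∀ x ∈ s, ‖g x‖ ≤ N) : ContinuousOn (fun x => a x • g x) s := by
  intro x hx
  by_cases h0 : a x = 0
  · have hlim : Filter.Tendsto (fun y => ‖a y‖ * N) (nhdsWithin x s) (nhds 0) := by
      simpa [ContinuousWithinAt, h0] using (ha x hx).norm.mul_const N
    rw [ContinuousWithinAt, h0, zero_smul]
    refine squeeze_zero_norm' ?_ hlim
    filter_upwards [self_mem_nhdsWithin] with y hy
    rw [norm_smul]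
    exact mul_le_mul_of_nonneg_left (hN y hy) (norm_nonneg _)
  · refine (ha x hx).smul ((hg x ⟨hx, h0⟩).mono_of_mem_nhdsWithin ?_)
    filter_upwards [self_mem_nhdsWithin, (ha x hx).eventually_ne h0] with y hy hya
    exact ⟨hy, hya⟩

/-- The conjugate of `T` under the inversion `x ↦ (inversionScale p q x)⁻¹ • x`. -/
noncomputable def inversionConj (p : Seminorm ℝ E) (q : E → ℝ) (T : E → E) (x : E) : E :=
  inversionScale p q x • T ((inversionScale p q x)⁻¹ • x)

theorem inv_inversionScale_smul_mem {x : E} (hx : x ∈ K) : (inversionScale p q x)⁻¹ • x ∈ K :=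
  K.smul_mem hx (inv_nonneg.2 (inversionScale_nonneg x))

theorem continuousOn_inversionConj (hp : Continuous p) (hq : Continuous q)
    (hqs : ∀ a : ℝ, 0 ≤ a → ∀ x, q (a • x) = a * q x) (hQ : IsCompact Q) {T : E → E}
    (hT : ContinuousOn T {x | x ∈ K ∧ q x ≤ 1}) (hTQ : ∀ x ∈ K, q x ≤ 1 → T x ∈ Q) :
    ContinuousOn (inversionConj p q T) K := by
  have hA := continuous_inversionScale hp hq
  obtain ⟨N, hN⟩ := hQ.isBounded.exists_norm_le
  refine continuousOn_smul_of_norm_le hA.continuousOn ?_ fun x hx => hN _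
    (hTQ _ (inv_inversionScale_smul_mem hx) (apply_inv_inversionScale_smul_le_one hqs x))
  exact hT.comp ((hA.continuousOn.inv₀ fun x hx => hx.2).smul continuousOn_id) fun x hx =>
    ⟨inv_inversionScale_smul_mem hx.1, apply_inv_inversionScale_smul_le_one hqs x⟩

-- On `{q = 1}` this is excluded by the hypothesis on `T`; elsewhere the scale is `p x ^ 2`.
theorem inversionScale_eq_sq_of_inversionConj_add_eq
    (hqs : ∀ a : ℝ, 0 ≤ a → ∀ x, q (a • x) = a * q x) {T : E → E}
    (hT : ∀ x ∈ K, q x = 1 → ∀ l ≥ (0 : ℝ), T x + l • e ≠ x) {x : E} (hx : x ∈ K) (hpx : 0 < p x)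
    {l : ℝ} (hl : 0 ≤ l) (hfix : inversionConj p q T x + l • e = x) :
    inversionScale p q x = p x ^ 2 := by
  have hpos : 0 < inversionScale p q x := inversionScale_pos hpx
  by_contra hne
  have hqx : inversionScale p q x = q x := (max_choice (p x ^ 2) (q x)).resolve_left hne
  rw [inversionConj] at hfix
  refine hT _ (inv_inversionScale_smul_mem (p := p) (q := q) hx) ?_
    ((inversionScale p q x)⁻¹ * l) (by positivity) ?_
  · rw [hqs _ (inv_nonneg.2 hpos.le), ← hqx, inv_mul_cancel₀ hpos.ne']
  · rw [← inv_smul_smul₀ hpos.ne' (T _), mul_smul, ← smul_add, hfix]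

theorem inversionConj_ne_smul (hqp : ∀ x ∈ K, q x ≤ p x) {T : E → E}
    (hT : ∀ x ∈ K, p x = 1 → p (T x) ≤ 1) {x : E} (hx : x ∈ K) (h1 : p x = 1) {a : ℝ}
    (ha : 1 < a) : inversionConj p q T x ≠ a • x := by
  intro h
  rw [inversionConj, inversionScale_eq_one (hqp x hx) h1, inv_one, one_smul, one_smul] at h
  have := hT x hx h1
  rw [h, map_smul_eq_mul, h1, mul_one, Real.norm_of_nonneg (by positivity)] at this
  exact this.not_gt ha

theorem inversionConj_add_smul_ne (hqs : ∀ a : ℝ, 0 ≤ a → ∀ x, q (a • x) = a * q x)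
    (hqp : ∀ x ∈ K, q x ≤ p x) (hR : ∀ x ∈ K, q x ≤ 1 → p x ≤ R) {T : E → E}
    (hT : ∀ x ∈ K, q x = 1 → ∀ l ≥ (0 : ℝ), T x + l • e ≠ x) (hpe : 0 < p e) {x : E}
    (hx : x ∈ K) (hxR : R * p x < 1) {l : ℝ} (hl : 0 < l) :
    inversionConj p q T x + l • e ≠ x := by
  intro h
  have hpx : 0 < p x := by
    refine (apply_nonneg p x).lt_of_ne' fun h0 => ?_
    have hscale : inversionScale p q x = 0 := by
      rw [inversionScale, h0, zero_pow two_ne_zero, max_eq_left ((hqp x hx).trans_eq h0)]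
    rw [inversionConj, hscale, zero_smul, zero_add] at h
    rw [← h, map_smul_eq_mul, Real.norm_of_nonneg hl.le] at h0
    exact (mul_pos hl hpe).ne' h0
  have hle := hR _ (inv_inversionScale_smul_mem hx)
    (apply_inv_inversionScale_smul_le_one (p := p) hqs x)
  rw [inversionScale_eq_sq_of_inversionConj_add_eq hqs hT hx hpx hl.le h, apply_inv_sq_smul,
    inv_le_iff_one_le_mul₀ hpx] at hle
  exact hle.not_gt hxR

theorem exists_fixedPoint_of_cone_expansion (hp : Continuous p) (hq : Continuous q)
    (hqs : ∀ a : ℝ, 0 ≤ a → ∀ x, q (a • x) = a * q x) (hqp : ∀ x ∈ K, q x ≤ p x)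
    (hR : ∀ x ∈ K, q x ≤ 1 → p x ≤ R) (hQ : IsCompact Q) {T : E → E}
    (hT : ContinuousOn T {x | x ∈ K ∧ q x ≤ 1}) (hTK : ∀ x ∈ K, q x ≤ 1 → T x ∈ K)
    (hTQ : ∀ x ∈ K, q x ≤ 1 → T x ∈ Q) (he : e ∈ K) (hpe : 0 < p e)
    (hinner : ∀ x ∈ K, p x = 1 → p (T x) ≤ 1)
    (houter : ∀ x ∈ K, q x = 1 → ∀ l ≥ (0 : ℝ), T x + l • e ≠ x) :
    ∃ x ∈ K, 1 ≤ p x ∧ q x ≤ 1 ∧ T x = x := by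
  have hle := apply_inv_inversionScale_smul_le_one (p := p) hqs
  have hR1 : 1 ≤ R := by
    have hpe1 : p ((p e)⁻¹ • e) = 1 := by
      rw [map_smul_eq_mul, Real.norm_of_nonneg (by positivity), inv_mul_cancel₀ hpe.ne']
    have heK : (p e)⁻¹ • e ∈ K := K.smul_mem he (by positivity)
    exact hpe1 ▸ hR _ heK ((hqp _ heK).trans hpe1.le)
  obtain ⟨x, hx, hx1, hxR, hfix⟩ := exists_fixedPoint_of_cone_compression hp
    (isCompact_Icc.smul_set hQ : IsCompact (Icc (0 : ℝ) 1 • Q))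
    ((continuousOn_inversionConj hp hq hqs hQ hT hTQ).mono fun x hx => hx.1)
    (fun x hx _ => K.smul_mem (hTK _ (inv_inversionScale_smul_mem hx) (hle x))
      (inversionScale_nonneg x))
    (fun x hx h1 => smul_mem_smul ⟨inversionScale_nonneg x, inversionScale_le_one (hqp x hx) h1⟩
      (hTQ _ (inv_inversionScale_smul_mem hx) (hle x)))
    he hR1 (fun x hx h1 a ha => inversionConj_ne_smul hqp hinner hx h1 ha)
    (fun x hx hxR l hl => inversionConj_add_smul_ne hqs hqp hR houter hpe hx hxR hl)
  have hpx : 0 < p x := (apply_nonneg p x).lt_of_ne' fun h0 => by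
    rw [h0, mul_zero] at hxR
    exact hxR.not_gt one_pos
  refine ⟨_, inv_inversionScale_smul_mem hx, ?_, hle x, ?_⟩
  · rw [inversionScale_eq_sq_of_inversionConj_add_eq hqs houter hx hpx le_rfl
      (by rw [zero_smul, add_zero, hfix]), apply_inv_sq_smul]
    exact (one_le_inv₀ hpx).2 hx1
  · rw [← inv_smul_smul₀ (inversionScale_pos hpx).ne' (T _)]
    exact congrArg _ hfix

end ConeFixedPoint

section HarnackCone

variable {S : Type*} [TopologicalSpace S] {J : Set S}

/-- The minimum of `u` over the nonempty compact set `J`. -/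
noncomputable def minValueOn (J : Set S) (u : C(S, ℝ)) : ℝ := sInf (u '' J)

theorem exists_mem_eq_minValueOn (hJ : IsCompact J) (hJne : J.Nonempty) (u : C(S, ℝ)) :
    ∃ t ∈ J, u t = minValueOn J u := by
  obtain ⟨t, ht, h⟩ := hJ.exists_sInf_image_eq hJne u.continuous.continuousOn
  exact ⟨t, ht, h.symm⟩

theorem minValueOn_le (hJ : IsCompact J) (u : C(S, ℝ)) {t : S} (ht : t ∈ J) :
    minValueOn J u ≤ u t :=
  csInf_le (hJ.bddBelow_image u.continuous.continuousOn) (mem_image_of_mem u ht)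

theorem minValueOn_smul {a : ℝ} (ha : 0 ≤ a) (u : C(S, ℝ)) :
    minValueOn J (a • u) = a * minValueOn J u := by
  rw [minValueOn, minValueOn, ← smul_eq_mul, ← Real.sInf_smul_of_nonneg ha, ← image_smul,
    image_image]
  rfl

theorem le_of_minValueOn_div_eq_one (hJ : IsCompact J) {r : ℝ} {u : C(S, ℝ)}
    (h : minValueOn J u / r = 1) {t : S} (ht : t ∈ J) : r ≤ u t :=
  (eq_of_div_eq_one h).ge.trans (minValueOn_le hJ u ht)

theorem add_smul_one_ne_of_minValueOn_div_eq_one (hJ : IsCompact J)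
    (hJne : J.Nonempty) {r : ℝ} {u w : C(S, ℝ)} (hu : minValueOn J u / r = 1)
    (hw : ∀ t ∈ J, r < w t) {l : ℝ} (hl : 0 ≤ l) : w + l • 1 ≠ u := by
  rintro rfl
  obtain ⟨t, ht, h⟩ := exists_mem_eq_minValueOn hJ hJne (w + l • 1)
  rw [eq_of_div_eq_one hu] at h
  have : w t + l * 1 = r := h
  linarith [hw t ht]

variable [CompactSpace S] {c : ℝ}

theorem continuous_minValueOn (hJ : IsCompact J) : Continuous (minValueOn J) :=
  hJ.continuous_sInf (f := fun (u : C(S, ℝ)) t => u t) (by fun_prop)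

theorem minValueOn_le_norm (hJ : IsCompact J) (hJne : J.Nonempty) (u : C(S, ℝ)) :
    minValueOn J u ≤ ‖u‖ := by
  obtain ⟨t, ht⟩ := hJne
  exact (minValueOn_le hJ u ht).trans ((le_abs_self _).trans (u.norm_coe_le_norm t))

/-- The cone of functions `u` with `c ‖u‖ ≤ u` on `J`. -/
def harnackCone (J : Set S) (hc : 0 ≤ c) : ProperCone ℝ C(S, ℝ) where
  carrier := {u | ∀ t ∈ J, c * ‖u‖ ≤ u t}
  add_mem' {u v} hu hv t ht := by
    calc c * ‖u + v‖ ≤ c * (‖u‖ + ‖v‖) := mul_le_mul_of_nonneg_left (norm_add_le u v) hc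
      _ ≤ u t + v t := by linarith [hu t ht, hv t ht]
  zero_mem' t _ := by simp
  smul_mem' a u hu t ht := by
    calc c * ‖(a : ℝ) • u‖ = a * (c * ‖u‖) := by
          rw [norm_smul, Real.norm_of_nonneg a.2, mul_left_comm]
      _ ≤ a * u t := mul_le_mul_of_nonneg_left (hu t ht) a.2
  isClosed' := by
    simp only [ofPred_forall]
    exact isClosed_biInter fun t _ => isClosed_le (by fun_prop) (by fun_prop)

theorem mul_norm_le_minValueOn (hJ : IsCompact J) (hJne : J.Nonempty) {hc : 0 ≤ c} {u : C(S, ℝ)}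
    (hu : u ∈ harnackCone J hc) : c * ‖u‖ ≤ minValueOn J u := by
  obtain ⟨t, ht, h⟩ := exists_mem_eq_minValueOn hJ hJne u
  exact h ▸ hu t ht

theorem one_mem_harnackCone [Nonempty S] {hc : 0 ≤ c} (hc1 : c ≤ 1) :
    (1 : C(S, ℝ)) ∈ harnackCone J hc := fun t _ => by
  rwa [norm_one, mul_one, ContinuousMap.one_apply]

theorem norm_le_div_of_minValueOn_div_le_one (hJ : IsCompact J) (hJne : J.Nonempty) {r : ℝ}
    (hc : 0 < c) (hr : 0 < r) {u : C(S, ℝ)} (hu : u ∈ harnackCone J hc.le)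
    (h : minValueOn J u / r ≤ 1) : ‖u‖ ≤ r / c := by
  rw [le_div_iff₀' hc]
  exact (mul_norm_le_minValueOn hJ hJne hu).trans ((div_le_one₀ hr).1 h)

end HarnackCone

section ProperConeProd

variable {E F : Type*} [NormedAddCommGroup E] [NormedSpace ℝ E] [NormedAddCommGroup F]
  [NormedSpace ℝ F] {ρ₁ ρ₂ : ℝ}

/-- The product of two proper cones. -/
def properConeProd (K₁ : ProperCone ℝ E) (K₂ : ProperCone ℝ F) : ProperCone ℝ (E × F) :=
  K₁.comap (ContinuousLinearMap.fst ℝ E F) ⊓ K₂.comap (ContinuousLinearMap.snd ℝ E F)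

/-- The norm on a product whose unit ball is the product of the balls of radii `ρ₁` and `ρ₂`. -/
noncomputable def boxSeminorm (E F : Type*) [NormedAddCommGroup E] [NormedSpace ℝ E]
    [NormedAddCommGroup F] [NormedSpace ℝ F] (ρ₁ ρ₂ : ℝ) : Seminorm ℝ (E × F) :=
  (normSeminorm ℝ (E × F)).comp ((ρ₁⁻¹ • LinearMap.id).prodMap (ρ₂⁻¹ • LinearMap.id))

theorem boxSeminorm_apply (hρ₁ : 0 < ρ₁) (hρ₂ : 0 < ρ₂) (x : E × F) :
    boxSeminorm E F ρ₁ ρ₂ x = max (‖x.1‖ / ρ₁) (‖x.2‖ / ρ₂) := by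
  change ‖(ρ₁⁻¹ • x.1, ρ₂⁻¹ • x.2)‖ = _
  rw [Prod.norm_mk, norm_smul_of_nonneg (inv_nonneg.2 hρ₁.le),
    norm_smul_of_nonneg (inv_nonneg.2 hρ₂.le), inv_mul_eq_div, inv_mul_eq_div]

theorem continuous_boxSeminorm : Continuous (boxSeminorm E F ρ₁ ρ₂) := by
  change Continuous fun x : E × F => ‖(ρ₁⁻¹ • x.1, ρ₂⁻¹ • x.2)‖
  fun_prop

theorem boxSeminorm_le_one_iff (hρ₁ : 0 < ρ₁) (hρ₂ : 0 < ρ₂) {x : E × F} :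
    boxSeminorm E F ρ₁ ρ₂ x ≤ 1 ↔ ‖x.1‖ ≤ ρ₁ ∧ ‖x.2‖ ≤ ρ₂ := by
  rw [boxSeminorm_apply hρ₁ hρ₂, max_le_iff, div_le_one₀ hρ₁, div_le_one₀ hρ₂]

end ProperConeProd

section HarnackConeProd

variable {S : Type*} [TopologicalSpace S] {J₁ J₂ : Set S} {r₁ r₂ : ℝ}

/-- The functional whose sublevel set `{q ≤ 1}` in a product of two Harnack cones consists of the
pairs with `min u ≤ r₁` on `J₁` and `min v ≤ r₂` on `J₂`. -/
noncomputable def minValueOnPair (J₁ J₂ : Set S) (r₁ r₂ : ℝ) (x : C(S, ℝ) × C(S, ℝ)) : ℝ :=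
  max (minValueOn J₁ x.1 / r₁) (minValueOn J₂ x.2 / r₂)

theorem minValueOnPair_smul {a : ℝ} (ha : 0 ≤ a) (x : C(S, ℝ) × C(S, ℝ)) :
    minValueOnPair J₁ J₂ r₁ r₂ (a • x) = a * minValueOnPair J₁ J₂ r₁ r₂ x := by
  simp only [minValueOnPair, Prod.smul_fst, Prod.smul_snd, minValueOn_smul ha, mul_div_assoc,
    mul_max_of_nonneg _ _ ha]

theorem add_smul_one_ne_of_minValueOnPair_eq_one (hJ₁ : IsCompact J₁) (hJ₁ne : J₁.Nonempty)
    (hJ₂ : IsCompact J₂) (hJ₂ne : J₂.Nonempty) {x y : C(S, ℝ) × C(S, ℝ)}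
    (hx : minValueOnPair J₁ J₂ r₁ r₂ x = 1)
    (h₁ : (∀ t ∈ J₁, r₁ ≤ x.1 t) → ∀ t ∈ J₁, r₁ < y.1 t)
    (h₂ : (∀ t ∈ J₂, r₂ ≤ x.2 t) → ∀ t ∈ J₂, r₂ < y.2 t) {l : ℝ} (hl : 0 ≤ l) :
    y + l • 1 ≠ x := by
  intro h
  rcases max_choice (minValueOn J₁ x.1 / r₁) (minValueOn J₂ x.2 / r₂) with hmax | hmax
  · have hone := hmax.symm.trans hx
    exact add_smul_one_ne_of_minValueOn_div_eq_one hJ₁ hJ₁ne hone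
      (h₁ fun t => le_of_minValueOn_div_eq_one hJ₁ hone) hl (congrArg Prod.fst h)
  · have hone := hmax.symm.trans hx
    exact add_smul_one_ne_of_minValueOn_div_eq_one hJ₂ hJ₂ne hone
      (h₂ fun t => le_of_minValueOn_div_eq_one hJ₂ hone) hl (congrArg Prod.snd h)

variable [CompactSpace S] {c₁ c₂ ρ₁ ρ₂ : ℝ}

theorem continuous_minValueOnPair (hJ₁ : IsCompact J₁) (hJ₂ : IsCompact J₂) :
    Continuous (minValueOnPair J₁ J₂ r₁ r₂) :=
  (((continuous_minValueOn hJ₁).comp continuous_fst).div_const r₁).max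
    (((continuous_minValueOn hJ₂).comp continuous_snd).div_const r₂)

theorem minValueOnPair_le_boxSeminorm (hJ₁ : IsCompact J₁) (hJ₁ne : J₁.Nonempty)
    (hJ₂ : IsCompact J₂) (hJ₂ne : J₂.Nonempty) (hρ₁ : 0 < ρ₁) (hρ₂ : 0 < ρ₂) (hr₁ : ρ₁ ≤ r₁)
    (hr₂ : ρ₂ ≤ r₂) (x : C(S, ℝ) × C(S, ℝ)) :
    minValueOnPair J₁ J₂ r₁ r₂ x ≤ boxSeminorm C(S, ℝ) C(S, ℝ) ρ₁ ρ₂ x := by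
  rw [boxSeminorm_apply hρ₁ hρ₂]
  refine max_le_max ?_ ?_
  · exact (div_le_div_of_nonneg_right (minValueOn_le_norm hJ₁ hJ₁ne _) (hρ₁.trans_le hr₁).le).trans
      (div_le_div_of_nonneg_left (norm_nonneg _) hρ₁ hr₁)
  · exact (div_le_div_of_nonneg_right (minValueOn_le_norm hJ₂ hJ₂ne _) (hρ₂.trans_le hr₂).le).trans
      (div_le_div_of_nonneg_left (norm_nonneg _) hρ₂ hr₂)

theorem norm_le_of_minValueOnPair_le_one (hJ₁ : IsCompact J₁) (hJ₁ne : J₁.Nonempty)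
    (hJ₂ : IsCompact J₂) (hJ₂ne : J₂.Nonempty) (hc₁ : 0 < c₁) (hc₂ : 0 < c₂) (hr₁ : 0 < r₁)
    (hr₂ : 0 < r₂) {x : C(S, ℝ) × C(S, ℝ)}
    (hx : x ∈ properConeProd (harnackCone J₁ hc₁.le) (harnackCone J₂ hc₂.le))
    (h : minValueOnPair J₁ J₂ r₁ r₂ x ≤ 1) : ‖x.1‖ ≤ r₁ / c₁ ∧ ‖x.2‖ ≤ r₂ / c₂ :=
  ⟨norm_le_div_of_minValueOn_div_le_one hJ₁ hJ₁ne hc₁ hr₁ hx.1 ((le_max_left _ _).trans h),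
    norm_le_div_of_minValueOn_div_le_one hJ₂ hJ₂ne hc₂ hr₂ hx.2 ((le_max_right _ _).trans h)⟩

theorem exists_ne_zero_fixedPoint_harnackCone_prod (hJ₁ : IsCompact J₁) (hJ₁ne : J₁.Nonempty)
    (hJ₂ : IsCompact J₂) (hJ₂ne : J₂.Nonempty) (hc₁ : 0 < c₁) (hc₁_le : c₁ ≤ 1) (hc₂ : 0 < c₂)
    (hc₂_le : c₂ ≤ 1) (hρ₁ : 0 < ρ₁) (hρ₂ : 0 < ρ₂) (hr₁ : ρ₁ ≤ r₁) (hr₂ : ρ₂ ≤ r₂)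
    {T : C(S, ℝ) × C(S, ℝ) → C(S, ℝ) × C(S, ℝ)} (hT : Continuous T)
    (hTc : ∀ N, ∃ Q, IsCompact Q ∧ ∀ x, ‖x‖ ≤ N → T x ∈ Q)
    (hTK : ∀ x, T x ∈ properConeProd (harnackCone J₁ hc₁.le) (harnackCone J₂ hc₂.le))
    (hinner : ∀ x, ‖x.1‖ ≤ ρ₁ → ‖x.2‖ ≤ ρ₂ → ‖(T x).1‖ ≤ ρ₁ ∧ ‖(T x).2‖ ≤ ρ₂)
    (houter₁ : ∀ x, (∀ t ∈ J₁, r₁ ≤ x.1 t) → ‖x.1‖ ≤ r₁ / c₁ → ‖x.2‖ ≤ r₂ / c₂ →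
      ∀ t ∈ J₁, r₁ < (T x).1 t)
    (houter₂ : ∀ x, (∀ t ∈ J₂, r₂ ≤ x.2 t) → ‖x.1‖ ≤ r₁ / c₁ → ‖x.2‖ ≤ r₂ / c₂ →
      ∀ t ∈ J₂, r₂ < (T x).2 t) :
    ∃ x ≠ 0, T x = x := by
  have : Nonempty S := hJ₁ne.nonempty
  have hbox := fun x => norm_le_of_minValueOnPair_le_one (x := x) hJ₁ hJ₁ne hJ₂ hJ₂ne hc₁ hc₂
    (hρ₁.trans_le hr₁) (hρ₂.trans_le hr₂)
  have hone : 0 < boxSeminorm C(S, ℝ) C(S, ℝ) ρ₁ ρ₂ 1 := by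
    rw [boxSeminorm_apply hρ₁ hρ₂, Prod.fst_one, norm_one]
    exact lt_max_of_lt_left (one_div_pos.2 hρ₁)
  obtain ⟨Q, hQ, hTQ⟩ := hTc (max (r₁ / c₁) (r₂ / c₂))
  obtain ⟨x, -, hx, -, hfix⟩ := exists_fixedPoint_of_cone_expansion
    (K := properConeProd (harnackCone J₁ hc₁.le) (harnackCone J₂ hc₂.le))
    (R := max (r₁ / c₁ / ρ₁) (r₂ / c₂ / ρ₂)) (e := 1)
    continuous_boxSeminorm (continuous_minValueOnPair hJ₁ hJ₂)
    (fun a ha x => minValueOnPair_smul ha x)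
    (fun x _ => minValueOnPair_le_boxSeminorm hJ₁ hJ₁ne hJ₂ hJ₂ne hρ₁ hρ₂ hr₁ hr₂ x)
    (fun x hx hqx => by
      rw [boxSeminorm_apply hρ₁ hρ₂]
      exact max_le_max (div_le_div_of_nonneg_right (hbox x hx hqx).1 hρ₁.le)
        (div_le_div_of_nonneg_right (hbox x hx hqx).2 hρ₂.le))
    hQ hT.continuousOn (fun x _ _ => hTK x)
    (fun x hx hqx => hTQ x (max_le_max (hbox x hx hqx).1 (hbox x hx hqx).2))
    ⟨one_mem_harnackCone (hc := hc₁.le) hc₁_le, one_mem_harnackCone (hc := hc₂.le) hc₂_le⟩ hone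
    (fun x _ hpx => by
      have h := (boxSeminorm_le_one_iff hρ₁ hρ₂).1 hpx.le
      exact (boxSeminorm_le_one_iff hρ₁ hρ₂).2 (hinner x h.1 h.2))
    (fun x hx hqx l hl =>
      have hx := hbox x hx hqx.le
      add_smul_one_ne_of_minValueOnPair_eq_one hJ₁ hJ₁ne hJ₂ hJ₂ne hqx
        (fun h => houter₁ x h hx.1 hx.2) (fun h => houter₂ x h hx.1 hx.2) hl)
  refine ⟨x, ?_, hfix⟩
  rintro rfl
  exact (map_zero (boxSeminorm C(S, ℝ) C(S, ℝ) ρ₁ ρ₂) ▸ hx).not_gt one_pos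

end HarnackConeProd

section PointwiseOperator

variable {X E F : Type*} [TopologicalSpace X] [CompactSpace X] [NormedAddCommGroup E]
  [NormedSpace ℝ E] [NormedAddCommGroup F] [NormedSpace ℝ F]

/-- The operator `g ↦ (x ↦ Φ x g)` attached to a continuous family `Φ` of operators. -/
noncomputable def pointwiseCLM (Φ : C(X, E →L[ℝ] F)) : E →L[ℝ] C(X, F) :=
  LinearMap.mkContinuous
    { toFun g := ⟨fun x => Φ x g, by fun_prop⟩
      map_add' g h := by ext x; exact map_add (Φ x) g h
      map_smul' a g := by ext x; exact map_smul (Φ x) a g } ‖Φ‖ fun g =>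
    (ContinuousMap.norm_le _ (by positivity)).2 fun x =>
      (Φ x).le_of_opNorm_le (Φ.norm_coe_le_norm x) g

theorem isCompactOperator_pointwiseCLM [ProperSpace F] (Φ : C(X, E →L[ℝ] F)) :
    IsCompactOperator (pointwiseCLM Φ) := by
  let e := ContinuousMap.isometryEquivBoundedOfCompact X F
  set A := e '' (pointwiseCLM Φ '' Metric.closedBall 0 1)
  have hA : IsCompact (closure A) := by
    refine BoundedContinuousFunction.arzela_ascoli _ (isCompact_closedBall 0 ‖pointwiseCLM Φ‖) A ?_
      fun x₀ => Metric.equicontinuousAt_of_continuity_modulus (fun x => dist (Φ x₀) (Φ x)) ?_ _ ?_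
    · rintro _ x ⟨_, ⟨g, hg, rfl⟩, rfl⟩
      rw [mem_closedBall_zero_iff] at hg ⊢
      exact (ContinuousMap.norm_coe_le_norm _ x).trans ((pointwiseCLM Φ).unit_le_opNorm g hg)
    · exact (continuous_const.dist Φ.continuous).tendsto' _ _ (dist_self _)
    · refine Filter.Eventually.of_forall fun x => ?_
      rintro ⟨_, _, ⟨g, hg, rfl⟩, rfl⟩
      change dist (Φ x₀ g) (Φ x g) ≤ dist (Φ x₀) (Φ x)
      rw [dist_eq_norm, dist_eq_norm]
      exact (Φ x₀ - Φ x).unit_le_opNorm g (mem_closedBall_zero_iff.1 hg)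
  refine (isCompactOperator_iff_image_closedBall_subset_compact
    (pointwiseCLM Φ : E →ₗ[ℝ] C(X, F)) one_pos).2
    ⟨e ⁻¹' closure A, e.toHomeomorph.isCompact_preimage.2 hA, fun w hw => ?_⟩
  exact subset_closure (mem_image_of_mem e hw)

end PointwiseOperator

section KernelOperator

variable {X S : Type*} [TopologicalSpace X] [CompactSpace X] [TopologicalSpace S] [CompactSpace S]
  [MeasurableSpace S] [OpensMeasurableSpace S] {μ : Measure S} [IsFiniteMeasure μ]

theorem integrable_continuousMap (g : C(S, ℝ)) : Integrable g μ :=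
  g.continuous.integrable_of_hasCompactSupport (HasCompactSupport.of_compactSpace g)

/-- Integration as a continuous linear functional on `C(S, ℝ)`. -/
noncomputable def continuousMapIntegralCLM (μ : Measure S) [IsFiniteMeasure μ] : C(S, ℝ) →L[ℝ] ℝ :=
  LinearMap.mkContinuous
    { toFun g := ∫ s, g s ∂μ
      map_add' g h := integral_add (integrable_continuousMap g) (integrable_continuousMap h)
      map_smul' a g := integral_const_mul a g } (μ.real univ) fun g =>
    (norm_integral_le_of_norm_le_const (Filter.Eventually.of_forall g.norm_coe_le_norm)).trans_eq
      (mul_comm _ _)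

/-- The linear integral operator with kernel `κ`. -/
noncomputable def kernelOp (μ : Measure S) [IsFiniteMeasure μ] (κ : C(X × S, ℝ)) :
    C(S, ℝ) →L[ℝ] C(X, ℝ) :=
  pointwiseCLM
    ⟨fun x => continuousMapIntegralCLM μ ∘L ContinuousLinearMap.mul ℝ C(S, ℝ) (κ.curry x),
      by fun_prop⟩

theorem kernelOp_apply (κ : C(X × S, ℝ)) (g : C(S, ℝ)) (x : X) :
    kernelOp μ κ g x = ∫ s, κ (x, s) * g s ∂μ := rfl

theorem isCompactOperator_kernelOp (κ : C(X × S, ℝ)) : IsCompactOperator (kernelOp μ κ) :=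
  isCompactOperator_pointwiseCLM _

end KernelOperator

section Nemytskii

variable {S E F : Type*} [TopologicalSpace S]

/-- The superposition operator `u ↦ f(·, u(·))`. -/
def nemytskii [TopologicalSpace E] [TopologicalSpace F] (f : C(S × E, F)) (u : C(S, E)) : C(S, F) :=
  f.comp ((ContinuousMap.id S).prodMk u)

theorem continuous_nemytskii [TopologicalSpace E] [TopologicalSpace F] [LocallyCompactSpace S]
    (f : C(S × E, F)) : Continuous (nemytskii f) :=
  ContinuousMap.continuous_of_continuous_uncurry _ (by
    change Continuous fun p : C(S, E) × S => f (p.2, p.1 p.2)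
    fun_prop)

theorem exists_norm_nemytskii_le [CompactSpace S] [NormedAddCommGroup E] [ProperSpace E]
    [NormedAddCommGroup F] (f : C(S × E, F)) (R : ℝ) :
    ∃ N, ∀ u : C(S, E), ‖u‖ ≤ R → ‖nemytskii f u‖ ≤ N := by
  have hcompact := (isCompact_univ (X := S)).prod (isCompact_closedBall (0 : E) R)
  obtain ⟨N, hN⟩ := hcompact.exists_bound_of_continuousOn f.continuous.continuousOn
  refine ⟨max N 0, fun u hu => (ContinuousMap.norm_le _ (le_max_right N 0)).2 fun s => ?_⟩
  exact le_max_of_le_left (hN (s, u s)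
    ⟨mem_univ s, mem_closedBall_zero_iff.2 ((u.norm_coe_le_norm s).trans hu)⟩)

end Nemytskii

section HammersteinOperator

variable {X S E F : Type*} [TopologicalSpace X] [CompactSpace X] [TopologicalSpace S]
  [CompactSpace S] [MeasurableSpace S] [OpensMeasurableSpace S] {μ : Measure S} [IsFiniteMeasure μ]
  [NormedAddCommGroup E] [NormedAddCommGroup F]

/-- The Hammerstein operator `(u, v) ↦ ∫ κ(·, s) f(s, u(s), v(s)) dμ(s)`. -/
noncomputable def hammersteinOp (μ : Measure S) [IsFiniteMeasure μ] (κ : C(X × S, ℝ))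
    (f : C(S × E × F, ℝ)) (x : C(S, E) × C(S, F)) : C(X, ℝ) :=
  kernelOp μ κ (nemytskii f (x.1.prodMk x.2))

theorem hammersteinOp_apply (κ : C(X × S, ℝ)) (f : C(S × E × F, ℝ)) (x : C(S, E) × C(S, F))
    (t : X) : hammersteinOp μ κ f x t = ∫ s, κ (t, s) * f (s, x.1 s, x.2 s) ∂μ := rfl

theorem continuous_hammersteinOp [LocallyCompactSpace S] (κ : C(X × S, ℝ)) (f : C(S × E × F, ℝ)) :
    Continuous (hammersteinOp μ κ f) := by
  have hpair : Continuous fun x : C(S, E) × C(S, F) => x.1.prodMk x.2 :=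
    ContinuousMap.continuous_of_continuous_uncurry _ (by
      change Continuous fun p : (C(S, E) × C(S, F)) × S => (p.1.1 p.2, p.1.2 p.2)
      fun_prop)
  exact (kernelOp μ κ).continuous.comp ((continuous_nemytskii f).comp hpair)

theorem exists_isCompact_hammersteinOp_mem [ProperSpace E] [ProperSpace F] (κ : C(X × S, ℝ))
    (f : C(S × E × F, ℝ)) (N : ℝ) :
    ∃ Q, IsCompact Q ∧ ∀ x : C(S, E) × C(S, F), ‖x‖ ≤ N → hammersteinOp μ κ f x ∈ Q := by
  obtain ⟨R, hR⟩ := exists_norm_nemytskii_le f N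
  obtain ⟨Q, hQ, hQR⟩ := (isCompactOperator_kernelOp (μ := μ) κ).image_closedBall_subset_compact
    (f := (kernelOp μ κ : C(S, ℝ) →ₗ[ℝ] C(X, ℝ))) R
  refine ⟨Q, hQ, fun x hx => hQR (mem_image_of_mem _ (mem_closedBall_zero_iff.2 (hR _ ?_)))⟩
  refine (ContinuousMap.norm_le _ ((norm_nonneg x).trans hx)).2 fun s => ?_
  exact (max_le_max (x.1.norm_coe_le_norm s) (x.2.norm_coe_le_norm s)).trans hx

end HammersteinOperator

section HarnackKernel

variable {S : Type*} [TopologicalSpace S] [MeasurableSpace S] {μ : Measure S}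
  {κ : C(S × S, ℝ)} {J : Set S} {c m M ρ r : ℝ}

/-- A kernel `κ` satisfying a Harnack inequality with constant `c` on the closed set `J`: for
`t ∈ J`, the section `κ(t, ·)` dominates `c |κ(t', ·)|` for every `t'`. The constants `m` and `M`
bound the integrals of `|κ(t, ·)|` over the space from above and those of `κ(t, ·)` over `J`, for
`t ∈ J`, from below. -/
structure IsHarnackKernel (μ : Measure S) (κ : C(S × S, ℝ)) (J : Set S) (c m M : ℝ) : Prop where
  isClosed : IsClosed J
  nonempty : J.Nonempty
  pos : 0 < c
  le_one : c ≤ 1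
  upper_pos : 0 < m
  lower_pos : 0 < M
  harnack : ∀ t ∈ J, ∀ t', ∀ᵐ s ∂μ, c * |κ (t', s)| ≤ κ (t, s)
  integral_abs_le : ∀ t, ∫ s, |κ (t, s)| ∂μ ≤ 1 / m
  le_setIntegral : ∀ t ∈ J, 1 / M ≤ ∫ s in J, κ (t, s) ∂μ

namespace IsHarnackKernel

theorem ae_nonneg (h : IsHarnackKernel μ κ J c m M) {t : S} (ht : t ∈ J) :
    ∀ᵐ s ∂μ, 0 ≤ κ (t, s) := by
  filter_upwards [h.harnack t ht t] with s hs
  exact (mul_nonneg h.pos.le (abs_nonneg _)).trans hs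

variable [CompactSpace S] [OpensMeasurableSpace S] [IsFiniteMeasure μ] {g : C(S, ℝ)}

theorem kernelOp_mem_harnackCone (h : IsHarnackKernel μ κ J c m M) (hg : ∀ s, 0 ≤ g s) :
    kernelOp μ κ g ∈ harnackCone J h.pos.le := by
  intro t ht
  have hint (t' : S) : Integrable (fun s => κ (t', s) * g s) μ :=
    integrable_continuousMap (κ.curry t' * g)
  have hle (t' : S) : c * ‖kernelOp μ κ g t'‖ ≤ kernelOp μ κ g t := by
    calc c * ‖∫ s, κ (t', s) * g s ∂μ‖ ≤ c * ∫ s, ‖κ (t', s) * g s‖ ∂μ :=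
          mul_le_mul_of_nonneg_left (norm_integral_le_integral_norm _) h.pos.le
      _ = ∫ s, c * ‖κ (t', s) * g s‖ ∂μ := (integral_const_mul _ _).symm
      _ ≤ ∫ s, κ (t, s) * g s ∂μ := by
          refine integral_mono_ae ((hint t').norm.const_mul c) (hint t) ?_
          filter_upwards [h.harnack t ht t'] with s hs
          rw [norm_mul, Real.norm_of_nonneg (hg s), ← mul_assoc]
          exact mul_le_mul_of_nonneg_right hs (hg s)
  have : Nonempty S := ⟨t⟩
  rw [← le_div_iff₀' h.pos, ContinuousMap.norm_le_of_nonempty]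
  exact fun t' => (le_div_iff₀' h.pos).2 (hle t')

theorem norm_kernelOp_le (h : IsHarnackKernel μ κ J c m M) (hρ : 0 ≤ ρ) (hg : ∀ s, |g s| ≤ m * ρ) :
    ‖kernelOp μ κ g‖ ≤ ρ := by
  refine (ContinuousMap.norm_le _ hρ).2 fun t => ?_
  rw [kernelOp_apply]
  have hint : Integrable (fun s => |κ (t, s)|) μ := (integrable_continuousMap (κ.curry t)).abs
  calc ‖∫ s, κ (t, s) * g s ∂μ‖ ≤ ∫ s, |κ (t, s)| * (m * ρ) ∂μ :=
        norm_integral_le_of_norm_le (hint.mul_const _) (Filter.Eventually.of_forall fun s =>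
          (norm_mul _ _).trans_le (mul_le_mul_of_nonneg_left (hg s) (abs_nonneg _)))
    _ = (∫ s, |κ (t, s)| ∂μ) * (m * ρ) := integral_mul_const _ _
    _ ≤ 1 / m * (m * ρ) :=
        mul_le_mul_of_nonneg_right (h.integral_abs_le t) (mul_nonneg h.upper_pos.le hρ)
    _ = ρ := by rw [← mul_assoc, one_div_mul_cancel h.upper_pos.ne', one_mul]

theorem lt_kernelOp (h : IsHarnackKernel μ κ J c m M) (hg : ∀ s, 0 ≤ g s)
    (hgJ : ∀ s ∈ J, M * r < g s) {t : S} (ht : t ∈ J) : r < kernelOp μ κ g t := by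
  have hint : Integrable (fun s => κ (t, s) * g s) μ := integrable_continuousMap (κ.curry t * g)
  obtain ⟨s₀, hs₀, hmin⟩ := h.isClosed.isCompact.exists_isMinOn h.nonempty g.continuous.continuousOn
  rw [kernelOp_apply]
  calc r < g s₀ / M := (lt_div_iff₀' h.lower_pos).2 (hgJ s₀ hs₀)
    _ = 1 / M * g s₀ := (one_div_mul_eq_div _ _).symm
    _ ≤ (∫ s in J, κ (t, s) ∂μ) * g s₀ :=
        mul_le_mul_of_nonneg_right (h.le_setIntegral t ht) (hg s₀)
    _ = ∫ s in J, κ (t, s) * g s₀ ∂μ := (integral_mul_const _ _).symm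
    _ ≤ ∫ s in J, κ (t, s) * g s ∂μ := by
        refine setIntegral_mono_ae_restrict
          ((integrable_continuousMap (κ.curry t)).mul_const _).integrableOn hint.integrableOn ?_
        filter_upwards [ae_restrict_of_ae (h.ae_nonneg ht),
            ae_restrict_mem h.isClosed.measurableSet] with s hκ hs
        exact mul_le_mul_of_nonneg_left (hmin hs) hκ
    _ ≤ ∫ s, κ (t, s) * g s ∂μ := by
        refine setIntegral_le_integral hint ?_
        filter_upwards [h.ae_nonneg ht] with s hκ
        exact mul_nonneg hκ (hg s)

end IsHarnackKernel

end HarnackKernel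

theorem existence_S2_general {S : Type*} [TopologicalSpace S] [CompactSpace S] [T2Space S]
    [MeasurableSpace S] [OpensMeasurableSpace S] {μ : Measure S} [IsFiniteMeasure μ]
    {κ₁ κ₂ : C(S × S, ℝ)} {f₁ f₂ : C(S × ℝ × ℝ, ℝ)} {J₁ J₂ : Set S}
    {c₁ m₁ M₁ c₂ m₂ M₂ ρ₁ ρ₂ r₁ r₂ : ℝ}
    (hκ₁ : IsHarnackKernel μ κ₁ J₁ c₁ m₁ M₁) (hκ₂ : IsHarnackKernel μ κ₂ J₂ c₂ m₂ M₂)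
    (hf₁ : ∀ p, 0 ≤ f₁ p) (hf₂ : ∀ p, 0 ≤ f₂ p) (hρ₁ : 0 < ρ₁) (hρ₂ : 0 < ρ₂)
    (hr₁ : ρ₁ ≤ r₁) (hr₂ : ρ₂ ≤ r₂)
    (hI1 : ∀ t, ∀ x ∈ Icc (-ρ₁) ρ₁, ∀ y ∈ Icc (-ρ₂) ρ₂,
      f₁ (t, x, y) ≤ m₁ * ρ₁ ∧ f₂ (t, x, y) ≤ m₂ * ρ₂)
    (hI0₁ : ∀ t ∈ J₁, ∀ x ∈ Icc r₁ (r₁ / c₁), ∀ y ∈ Icc (-(r₂ / c₂)) (r₂ / c₂),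
      M₁ * r₁ < f₁ (t, x, y))
    (hI0₂ : ∀ t ∈ J₂, ∀ x ∈ Icc (-(r₁ / c₁)) (r₁ / c₁), ∀ y ∈ Icc r₂ (r₂ / c₂),
      M₂ * r₂ < f₂ (t, x, y)) :
    ∃ u v : C(S, ℝ), (u ≠ 0 ∨ v ≠ 0) ∧
      (∀ t ∈ J₁, c₁ * ‖u‖ ≤ u t) ∧ (∀ t ∈ J₂, c₂ * ‖v‖ ≤ v t) ∧
      (∀ t, u t = ∫ s, κ₁ (t, s) * f₁ (s, u s, v s) ∂μ) ∧
      ∀ t, v t = ∫ s, κ₂ (t, s) * f₂ (s, u s, v s) ∂μ := by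
  let T x := (hammersteinOp μ κ₁ f₁ x, hammersteinOp μ κ₂ f₂ x)
  have hmem {u : C(S, ℝ)} {R : ℝ} (hu : ‖u‖ ≤ R) (s : S) : u s ∈ Icc (-R) R :=
    abs_le.1 ((u.norm_coe_le_norm s).trans hu)
  have hTK (x) : T x ∈ properConeProd (harnackCone J₁ hκ₁.pos.le) (harnackCone J₂ hκ₂.pos.le) :=
    ⟨hκ₁.kernelOp_mem_harnackCone fun s => hf₁ _, hκ₂.kernelOp_mem_harnackCone fun s => hf₂ _⟩
  obtain ⟨x, hx, hfix⟩ := exists_ne_zero_fixedPoint_harnackCone_prod hκ₁.isClosed.isCompact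
    hκ₁.nonempty hκ₂.isClosed.isCompact hκ₂.nonempty hκ₁.pos hκ₁.le_one hκ₂.pos hκ₂.le_one hρ₁ hρ₂
    hr₁ hr₂ (T := T) ((continuous_hammersteinOp κ₁ f₁).prodMk (continuous_hammersteinOp κ₂ f₂))
    (fun N => by
      obtain ⟨Q₁, hQ₁, hTQ₁⟩ := exists_isCompact_hammersteinOp_mem (μ := μ) κ₁ f₁ N
      obtain ⟨Q₂, hQ₂, hTQ₂⟩ := exists_isCompact_hammersteinOp_mem (μ := μ) κ₂ f₂ N
      exact ⟨Q₁ ×ˢ Q₂, hQ₁.prod hQ₂, fun x hx => ⟨hTQ₁ x hx, hTQ₂ x hx⟩⟩)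
    hTK
    (fun x hx₁ hx₂ =>
      have hf s := hI1 s _ (hmem hx₁ s) _ (hmem hx₂ s)
      ⟨hκ₁.norm_kernelOp_le hρ₁.le fun s => (abs_of_nonneg (hf₁ _)).trans_le (hf s).1,
        hκ₂.norm_kernelOp_le hρ₂.le fun s => (abs_of_nonneg (hf₂ _)).trans_le (hf s).2⟩)
    (fun x hx hx₁ hx₂ t => hκ₁.lt_kernelOp (fun s => hf₁ _) fun s hs =>
      hI0₁ s hs _ ⟨hx s hs, (hmem hx₁ s).2⟩ _ (hmem hx₂ s))
    (fun x hx hx₁ hx₂ t => hκ₂.lt_kernelOp (fun s => hf₂ _) fun s hs =>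
      hI0₂ s hs _ (hmem hx₁ s) _ ⟨hx s hs, (hmem hx₂ s).2⟩)
  have hxK := hfix ▸ hTK x
  exact ⟨x.1, x.2, not_and_or.1 fun h => hx (Prod.ext h.1 h.2), hxK.1, hxK.2,
    fun t => by rw [← hammersteinOp_apply κ₁ f₁, ← congrArg Prod.fst hfix],
    fun t => by rw [← hammersteinOp_apply κ₂ f₂, ← congrArg Prod.snd hfix]⟩

section UnitInterval

/-- A continuous kernel on the unit square as a bundled continuous map. -/
def unitSquareMap (k : ℝ → ℝ → ℝ)
    (hk : ContinuousOn (fun p : ℝ × ℝ => k p.1 p.2) (Icc 0 1 ×ˢ Icc 0 1)) :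
    C(unitInterval × unitInterval, ℝ) :=
  ⟨fun p => k p.1 p.2, hk.comp_continuous (f := fun p : unitInterval × unitInterval =>
    ((p.1 : ℝ), (p.2 : ℝ))) (by fun_prop) fun p => ⟨p.1.2, p.2.2⟩⟩

/-- A nonlinearity that is continuous on `[0, 1] × ℝ × ℝ` as a bundled continuous map. -/
def unitStripMap (f : ℝ → ℝ → ℝ → ℝ)
    (hf : ContinuousOn (fun p : ℝ × ℝ × ℝ => f p.1 p.2.1 p.2.2) (Icc 0 1 ×ˢ univ)) :
    C(unitInterval × ℝ × ℝ, ℝ) :=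
  ⟨fun p => f p.1 p.2.1 p.2.2, hf.comp_continuous (f := fun p : unitInterval × ℝ × ℝ =>
    ((p.1 : ℝ), p.2)) (by fun_prop) fun p => ⟨p.1.2, mem_univ _⟩⟩

theorem setIntegral_unitInterval_eq_intervalIntegral {a b : ℝ} (ha : 0 ≤ a) (hab : a ≤ b)
    (hb : b ≤ 1) (F : ℝ → ℝ) :
    ∫ s in ((↑) : unitInterval → ℝ) ⁻¹' Icc a b, F s = ∫ s in a..b, F s := by
  rw [unitInterval.measurePreserving_coe.setIntegral_preimage_emb
      (MeasurableEmbedding.subtype_coe measurableSet_Icc),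
    Measure.restrict_restrict measurableSet_Icc, inter_eq_left.2 (Icc_subset_Icc ha hb),
    integral_Icc_eq_integral_Ioc, intervalIntegral.integral_of_le hab]

theorem integral_unitInterval_eq_intervalIntegral (F : ℝ → ℝ) :
    ∫ s : unitInterval, F s = ∫ s in (0 : ℝ)..1, F s := by
  rw [← setIntegral_unitInterval_eq_intervalIntegral le_rfl zero_le_one le_rfl,
    Subtype.coe_preimage_self, setIntegral_univ]

theorem isHarnackKernel_unitSquareMap {k : ℝ → ℝ → ℝ} {Φ : ℝ → ℝ} {a b c m M : ℝ}
    (hk : ContinuousOn (fun p : ℝ × ℝ => k p.1 p.2) (Icc 0 1 ×ˢ Icc 0 1))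
    (ha : 0 ≤ a) (hab : a ≤ b) (hb : b ≤ 1) (hc : c ∈ Ioc (0 : ℝ) 1)
    (hub : ∀ t ∈ Icc (0 : ℝ) 1, ∀ᵐ s ∂volume.restrict (Icc (0 : ℝ) 1), |k t s| ≤ Φ s)
    (hlb : ∀ t ∈ Icc a b, ∀ᵐ s ∂volume.restrict (Icc (0 : ℝ) 1), c * Φ s ≤ k t s)
    (hmpos : 0 < m) (hm : 1 / m = ⨆ t : Icc (0 : ℝ) 1, ∫ s in (0 : ℝ)..1, |k t.1 s|)
    (hMpos : 0 < M) (hM : 1 / M = ⨅ t : Icc a b, ∫ s in a..b, k t.1 s) :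
    IsHarnackKernel volume (unitSquareMap k hk) ((↑) ⁻¹' Icc a b) c m M where
  isClosed := isClosed_Icc.preimage continuous_subtype_val
  nonempty := ⟨⟨a, ha, hab.trans hb⟩, left_mem_Icc.2 hab⟩
  pos := hc.1
  le_one := hc.2
  upper_pos := hmpos
  lower_pos := hMpos
  harnack t ht t' := by
    refine (ae_restrict_iff_subtype (p := fun s => c * |k t' s| ≤ k t s) measurableSet_Icc).1 ?_
    filter_upwards [hub t' t'.2, hlb t ht] with s hub hlb
    exact (mul_le_mul_of_nonneg_left hub hc.1.le).trans hlb
  integral_abs_le t := by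
    -- The supremum of an unbounded family is `0`, which `hm` excludes.
    have hbdd : BddAbove (range fun t : Icc (0 : ℝ) 1 => ∫ s in (0 : ℝ)..1, |k t.1 s|) := by
      by_contra hunbdd
      rw [Real.iSup_of_not_bddAbove hunbdd] at hm
      exact (one_div_pos.2 hmpos).ne' hm
    exact (integral_unitInterval_eq_intervalIntegral fun s => |k t s|).trans_le
      (hm ▸ le_ciSup hbdd t)
  le_setIntegral t ht := by
    have hbdd : BddBelow (range fun t : Icc a b => ∫ s in a..b, k t.1 s) := by
      by_contra hunbdd
      rw [Real.iInf_of_not_bddBelow hunbdd] at hM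
      exact (one_div_pos.2 hMpos).ne' hM
    exact (hM ▸ ciInf_le hbdd ⟨t, ht⟩ :).trans_eq
      (setIntegral_unitInterval_eq_intervalIntegral ha hab hb (k t)).symm

theorem supNorm_IccExtend (u : C(unitInterval, ℝ)) : supNorm (IccExtend zero_le_one u) = ‖u‖ := by
  simp only [supNorm, IccExtend_val, ContinuousMap.norm_eq_iSup_norm, Real.norm_eq_abs]

theorem le_infOn_IccExtend {a b B : ℝ} {u : C(unitInterval, ℝ)} (ha : 0 ≤ a) (hab : a ≤ b)
    (hb : b ≤ 1) (hu : ∀ t : unitInterval, (t : ℝ) ∈ Icc a b → B ≤ u t) :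
    B ≤ infOn a b (IccExtend zero_le_one u) := by
  have : Nonempty (Icc a b) := ⟨⟨a, left_mem_Icc.2 hab⟩⟩
  refine le_ciInf fun t => ?_
  rw [IccExtend_of_mem _ _ (Icc_subset_Icc ha hb t.2)]
  exact hu _ t.2

theorem IccExtend_eq_intervalIntegral {k : ℝ → ℝ → ℝ} {f : ℝ → ℝ → ℝ → ℝ}
    {u v w : C(unitInterval, ℝ)}
    (hw : ∀ t, w t = ∫ s : unitInterval, k t s * f s (u s) (v s)) {t : ℝ}
    (ht : t ∈ Icc (0 : ℝ) 1) :
    IccExtend zero_le_one w t = ∫ s in (0 : ℝ)..1,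
      k t s * f s (IccExtend zero_le_one u s) (IccExtend zero_le_one v s) := by
  rw [IccExtend_of_mem _ _ ht, hw, ← integral_unitInterval_eq_intervalIntegral]
  simp only [IccExtend_val]

theorem nontrivialSolution_IccExtend {k₁ k₂ : ℝ → ℝ → ℝ} {f₁ f₂ : ℝ → ℝ → ℝ → ℝ}
    {a₁ b₁ c₁ a₂ b₂ c₂ : ℝ} {u v : C(unitInterval, ℝ)} (ha₁ : 0 ≤ a₁) (hab₁ : a₁ ≤ b₁)
    (hb₁ : b₁ ≤ 1) (ha₂ : 0 ≤ a₂) (hab₂ : a₂ ≤ b₂) (hb₂ : b₂ ≤ 1) (hne : u ≠ 0 ∨ v ≠ 0)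
    (hu : ∀ t : unitInterval, (t : ℝ) ∈ Icc a₁ b₁ → c₁ * ‖u‖ ≤ u t)
    (hv : ∀ t : unitInterval, (t : ℝ) ∈ Icc a₂ b₂ → c₂ * ‖v‖ ≤ v t)
    (hu_eq : ∀ t, u t = ∫ s : unitInterval, k₁ t s * f₁ s (u s) (v s))
    (hv_eq : ∀ t, v t = ∫ s : unitInterval, k₂ t s * f₂ s (u s) (v s)) :
    nontrivialSolution k₁ k₂ f₁ f₂ a₁ b₁ c₁ a₂ b₂ c₂ (IccExtend zero_le_one u)
      (IccExtend zero_le_one v) := by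
  refine ⟨⟨u.continuous.Icc_extend'.continuousOn, v.continuous.Icc_extend'.continuousOn, ?_, ?_⟩,
    ⟨fun t => IccExtend_eq_intervalIntegral hu_eq,
      fun t => IccExtend_eq_intervalIntegral hv_eq⟩, ?_⟩
  · exact supNorm_IccExtend u ▸ le_infOn_IccExtend ha₁ hab₁ hb₁ hu
  · exact supNorm_IccExtend v ▸ le_infOn_IccExtend ha₂ hab₂ hb₂ hv
  · rw [supNorm_IccExtend, supNorm_IccExtend, lt_max_iff]
    exact hne.imp norm_pos_iff.2 norm_pos_iff.2

end UnitInterval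

theorem existence_S2
    (k₁ k₂ : ℝ → ℝ → ℝ) (f₁ f₂ : ℝ → ℝ → ℝ → ℝ) (Φ₁ Φ₂ : ℝ → ℝ)
    (a₁ b₁ c₁ a₂ b₂ c₂ : ℝ)
    (hk₁ : ContinuousOn (fun p : ℝ × ℝ => k₁ p.1 p.2) (Set.Icc 0 1 ×ˢ Set.Icc 0 1))
    (hk₂ : ContinuousOn (fun p : ℝ × ℝ => k₂ p.1 p.2) (Set.Icc 0 1 ×ˢ Set.Icc 0 1))
    (ha₁ : 0 ≤ a₁) (hab₁ : a₁ ≤ b₁) (hb₁ : b₁ ≤ 1)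
    (ha₂ : 0 ≤ a₂) (hab₂ : a₂ ≤ b₂) (hb₂ : b₂ ≤ 1)
    (hc₁ : c₁ ∈ Set.Ioc (0:ℝ) 1) (hc₂ : c₂ ∈ Set.Ioc (0:ℝ) 1)
    (hΦ₁meas : Measurable Φ₁) (hΦ₂meas : Measurable Φ₂)
    (hΦ₁nn : ∀ s ∈ Set.Icc (0:ℝ) 1, 0 ≤ Φ₁ s) (hΦ₂nn : ∀ s ∈ Set.Icc (0:ℝ) 1, 0 ≤ Φ₂ s)
    (hΦ₁bdd : ∃ C : ℝ, ∀ᵐ s ∂(volume.restrict (Set.Icc (0:ℝ) 1)), |Φ₁ s| ≤ C)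
    (hΦ₂bdd : ∃ C : ℝ, ∀ᵐ s ∂(volume.restrict (Set.Icc (0:ℝ) 1)), |Φ₂ s| ≤ C)
    (hΦ₁pos : 0 < ∫ s in a₁..b₁, Φ₁ s) (hΦ₂pos : 0 < ∫ s in a₂..b₂, Φ₂ s)
    (hub₁ : ∀ t ∈ Set.Icc (0:ℝ) 1, ∀ᵐ s ∂(volume.restrict (Set.Icc (0:ℝ) 1)), |k₁ t s| ≤ Φ₁ s)
    (hub₂ : ∀ t ∈ Set.Icc (0:ℝ) 1, ∀ᵐ s ∂(volume.restrict (Set.Icc (0:ℝ) 1)), |k₂ t s| ≤ Φ₂ s)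
    (hlb₁ : ∀ t ∈ Set.Icc a₁ b₁, ∀ᵐ s ∂(volume.restrict (Set.Icc (0:ℝ) 1)), c₁ * Φ₁ s ≤ k₁ t s)
    (hlb₂ : ∀ t ∈ Set.Icc a₂ b₂, ∀ᵐ s ∂(volume.restrict (Set.Icc (0:ℝ) 1)), c₂ * Φ₂ s ≤ k₂ t s)
    (hf₁ : ContinuousOn (fun p : ℝ × ℝ × ℝ => f₁ p.1 p.2.1 p.2.2)
      (Set.Icc 0 1 ×ˢ (Set.univ : Set (ℝ × ℝ))))
    (hf₂ : ContinuousOn (fun p : ℝ × ℝ × ℝ => f₂ p.1 p.2.1 p.2.2)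
      (Set.Icc 0 1 ×ˢ (Set.univ : Set (ℝ × ℝ))))
    (hf₁nn : ∀ t ∈ Set.Icc (0:ℝ) 1, ∀ x y : ℝ, 0 ≤ f₁ t x y)
    (hf₂nn : ∀ t ∈ Set.Icc (0:ℝ) 1, ∀ x y : ℝ, 0 ≤ f₂ t x y)
    (m₁ m₂ M₁ M₂ : ℝ)
    (hm₁pos : 0 < m₁) (hm₂pos : 0 < m₂)
    (hm₁ : 1 / m₁ = ⨆ t : Set.Icc (0:ℝ) 1, ∫ s in (0:ℝ)..1, |k₁ t.1 s|)
    (hm₂ : 1 / m₂ = ⨆ t : Set.Icc (0:ℝ) 1, ∫ s in (0:ℝ)..1, |k₂ t.1 s|)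
    (hM₁pos : 0 < M₁) (hM₂pos : 0 < M₂)
    (hinf₁pos : 0 < ⨅ t : Set.Icc a₁ b₁, ∫ s in a₁..b₁, k₁ t.1 s)
    (hinf₂pos : 0 < ⨅ t : Set.Icc a₂ b₂, ∫ s in a₂..b₂, k₂ t.1 s)
    (hM₁ : 1 / M₁ = ⨅ t : Set.Icc a₁ b₁, ∫ s in a₁..b₁, k₁ t.1 s)
    (hM₂ : 1 / M₂ = ⨅ t : Set.Icc a₂ b₂, ∫ s in a₂..b₂, k₂ t.1 s)
    (ρ₁ ρ₂ r₁ r₂ : ℝ) (hρ₁ : 0 < ρ₁) (hρ₂ : 0 < ρ₂) (hr₁pos : 0 < r₁) (hr₂pos : 0 < r₂)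
    (hr₁ : ρ₁ < r₁) (hr₂ : ρ₂ < r₂)
    (hI1 : condI1 f₁ f₂ m₁ m₂ ρ₁ ρ₂)
    (hI0 : condI0 f₁ f₂ a₁ b₁ c₁ a₂ b₂ c₂ M₁ M₂ r₁ r₂)
    :
    ∃ u v : ℝ → ℝ, nontrivialSolution k₁ k₂ f₁ f₂ a₁ b₁ c₁ a₂ b₂ c₂ u v := by
  obtain ⟨u, v, hne, hu, hv, hu_eq, hv_eq⟩ := existence_S2_general
    (isHarnackKernel_unitSquareMap hk₁ ha₁ hab₁ hb₁ hc₁ hub₁ hlb₁ hm₁pos hm₁ hM₁pos hM₁)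
    (isHarnackKernel_unitSquareMap hk₂ ha₂ hab₂ hb₂ hc₂ hub₂ hlb₂ hm₂pos hm₂ hM₂pos hM₂)
    (f₁ := unitStripMap f₁ hf₁) (f₂ := unitStripMap f₂ hf₂)
    (fun p => hf₁nn p.1 p.1.2 _ _) (fun p => hf₂nn p.1 p.1.2 _ _) hρ₁ hρ₂ hr₁.le hr₂.le
    (fun t x hx y hy => ⟨(hI1 t t.2 x hx y hy).1.le, (hI1 t t.2 x hx y hy).2.le⟩)
    (fun t ht => hI0.1 t ht) (fun t ht => hI0.2 t ht)
  exact ⟨_, _, nontrivialSolution_IccExtend ha₁ hab₁ hb₁ ha₂ hab₂ hb₂ hne hu hv hu_eq hv_eq⟩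
end

section
/- (Non-existence, case (1)) Assume that for each i=1,2 one has f_i(t,u₁,u₂) < m_i |u_i| for every t ∈ [0,1] and all (u₁,u₂) ∈ ℝ² with u_i ≠ 0. Then the system (*) has no nontrivial solution in K. -/
open MeasureTheory Set

/-!
Put `‖u‖ = |u t₀|`. Letting `x → 0` in the hypothesis gives `f₁ s 0 y = 0`, so
`|f₁ s (u s) (v s)| < m₁ ‖u‖` for every `s` once `u ≠ 0`, and by compactness the left-hand side
attains its maximum. Inserting this in the equation at `t₀` gives
`‖u‖ < m₁ ‖u‖ ∫ |k₁ t₀ s| ds ≤ ‖u‖`, a contradiction. The other unknown only enters as a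
parameter, so the two equations can be treated separately.
-/

section Hammerstein

open Topology

lemma eq_zero_of_norm_le_mul_norm {E F : Type*} [SeminormedAddCommGroup E] [NormedAddCommGroup F]
    [(𝓝[≠] (0 : E)).NeBot] {g : E → F} {m : ℝ} (hg : ContinuousAt g 0)
    (h : ∀ x ≠ 0, ‖g x‖ ≤ m * ‖x‖) : g 0 = 0 := by
  have hle : ‖g 0‖ ≤ m * ‖(0 : E)‖ :=
    ContinuousWithinAt.closure_le (dense_compl_singleton (0 : E) 0) hg.norm.continuousWithinAt
      (by fun_prop) h
  simpa only [norm_zero, mul_zero, norm_le_zero_iff] using hle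

variable {X E : Type*} [MeasurableSpace X] {μ : Measure X} {S : Set X}
  [NormedAddCommGroup E] [NormedSpace ℝ E]

lemma norm_setIntegral_smul_le {φ : X → ℝ} {h : X → E} {C : ℝ} (hS : MeasurableSet S)
    (hφ : IntegrableOn φ S μ) (hh : ∀ s ∈ S, ‖h s‖ ≤ C) :
    ‖∫ s in S, φ s • h s ∂μ‖ ≤ C * ∫ s in S, |φ s| ∂μ := by
  rw [← integral_const_mul]
  refine norm_integral_le_of_norm_le (hφ.abs.const_mul C)
    (ae_restrict_of_forall_mem hS fun s hs ↦ ?_)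
  rw [norm_smul, Real.norm_eq_abs, mul_comm]
  gcongr
  exact hh s hs

theorem eqOn_zero_of_hammerstein [TopologicalSpace X] {k : X → X → ℝ} {g : X → E → E} {w : X → E}
    {m : ℝ} (hS : IsCompact S) (hSm : MeasurableSet S)
    (hk : ∀ t ∈ S, IntegrableOn (k t) S μ) (hkm : ∀ t ∈ S, ∫ s in S, |k t s| ∂μ ≤ 1 / m)
    (hw : ContinuousOn w S) (hgw : ContinuousOn (fun s ↦ g s (w s)) S)
    (hg : ∀ s ∈ S, ContinuousAt (g s) 0) (hgm : ∀ s ∈ S, ∀ x ≠ 0, ‖g s x‖ < m * ‖x‖)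
    (hsol : ∀ t ∈ S, w t = ∫ s in S, k t s • g s (w s) ∂μ) : EqOn w 0 S := by
  intro t ht
  by_contra hwt
  obtain ⟨t₀, ht₀, hw_max⟩ := hS.exists_isMaxOn ⟨t, ht⟩ hw.norm
  obtain ⟨s₀, hs₀, hg_max⟩ := hS.exists_isMaxOn ⟨t, ht⟩ hgw.norm
  have hw_pos : 0 < ‖w t₀‖ := (norm_pos_iff.2 hwt).trans_le (hw_max ht)
  have hm : 0 < m :=
    pos_of_mul_pos_left ((norm_nonneg _).trans_lt (hgm t ht (w t) hwt)) (norm_nonneg _)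
  have hg_lt : ‖g s₀ (w s₀)‖ < m * ‖w t₀‖ := by
    by_cases hws : w s₀ = 0
    · have : Nontrivial E := ⟨w t, 0, hwt⟩
      have : (𝓝[≠] (0 : E)).NeBot := Module.punctured_nhds_neBot ℝ E 0
      rw [hws, eq_zero_of_norm_le_mul_norm (hg s₀ hs₀) fun x hx ↦ (hgm s₀ hs₀ x hx).le, norm_zero]
      positivity
    · exact (hgm s₀ hs₀ _ hws).trans_le (mul_le_mul_of_nonneg_left (hw_max hs₀) hm.le)
  refine lt_irrefl ‖w t₀‖ ?_
  calc ‖w t₀‖ = ‖∫ s in S, k t₀ s • g s (w s) ∂μ‖ := congrArg norm (hsol t₀ ht₀)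
    _ ≤ ‖g s₀ (w s₀)‖ * ∫ s in S, |k t₀ s| ∂μ :=
      norm_setIntegral_smul_le hSm (hk t₀ ht₀) fun _ hs ↦ hg_max hs
    _ ≤ ‖g s₀ (w s₀)‖ * (1 / m) := by gcongr; exact hkm t₀ ht₀
    _ < m * ‖w t₀‖ * (1 / m) := by gcongr
    _ = ‖w t₀‖ := by field_simp

end Hammerstein

lemma intervalIntegral_abs_kernel_le_iSup {Y : Type*} [TopologicalSpace Y] {T : Set Y}
    {k : Y → ℝ → ℝ} {a b : ℝ} (hT : IsCompact T) (hab : a ≤ b)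
    (hk : ContinuousOn (fun p : Y × ℝ ↦ k p.1 p.2) (T ×ˢ Icc a b)) :
    ∀ t ∈ T, ∫ s in a..b, |k t s| ≤ ⨆ t : T, ∫ s in a..b, |k t.1 s| := by
  obtain ⟨C, hC⟩ := (hT.prod isCompact_Icc).exists_bound_of_continuousOn hk
  have hbdd : BddAbove (range fun t : T ↦ ∫ s in a..b, |k t.1 s|) := by
    refine ⟨C * |b - a|, forall_mem_range.2 fun t ↦ (Real.le_norm_self _).trans ?_⟩
    refine intervalIntegral.norm_integral_le_of_norm_le_const fun s hs ↦ ?_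
    rw [norm_abs_eq_norm]
    exact hC (t.1, s) ⟨t.2, Ioc_subset_Icc_self (uIoc_of_le hab ▸ hs)⟩
  exact fun t ht ↦ le_ciSup hbdd ⟨t, ht⟩

lemma supNorm_eq_zero_of_eqOn {w : ℝ → ℝ} (hw : EqOn w 0 (Icc 0 1)) : supNorm w = 0 := by
  simp only [supNorm, hw (Subtype.prop _), Pi.zero_apply, abs_zero, Real.iSup_const_zero]

theorem nonexistence_case1_general {k₁ k₂ : ℝ → ℝ → ℝ} {f₁ f₂ : ℝ → ℝ → ℝ → ℝ} {m₁ m₂ : ℝ}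
    {u v : ℝ → ℝ}
    (hk₁ : ∀ t ∈ Icc (0 : ℝ) 1, IntegrableOn (k₁ t) (Icc 0 1))
    (hk₂ : ∀ t ∈ Icc (0 : ℝ) 1, IntegrableOn (k₂ t) (Icc 0 1))
    (hm₁ : ∀ t ∈ Icc (0 : ℝ) 1, ∫ s in (0 : ℝ)..1, |k₁ t s| ≤ 1 / m₁)
    (hm₂ : ∀ t ∈ Icc (0 : ℝ) 1, ∫ s in (0 : ℝ)..1, |k₂ t s| ≤ 1 / m₂)
    (hf₁ : ContinuousOn (fun p : ℝ × ℝ × ℝ ↦ f₁ p.1 p.2.1 p.2.2) (Icc 0 1 ×ˢ univ))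
    (hf₂ : ContinuousOn (fun p : ℝ × ℝ × ℝ ↦ f₂ p.1 p.2.1 p.2.2) (Icc 0 1 ×ˢ univ))
    (h1 : ∀ t ∈ Icc (0 : ℝ) 1, ∀ x y, x ≠ 0 → |f₁ t x y| < m₁ * |x|)
    (h2 : ∀ t ∈ Icc (0 : ℝ) 1, ∀ x y, y ≠ 0 → |f₂ t x y| < m₂ * |y|)
    (hu : ContinuousOn u (Icc 0 1)) (hv : ContinuousOn v (Icc 0 1))
    (hsol : isSolution k₁ k₂ f₁ f₂ u v) :
    EqOn u 0 (Icc 0 1) ∧ EqOn v 0 (Icc 0 1) := by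
  simp only [isSolution, intervalIntegral.integral_of_le zero_le_one,
    ← integral_Icc_eq_integral_Ioc] at hm₁ hm₂ hsol
  have huv : ContinuousOn (fun s ↦ (s, u s, v s)) (Icc 0 1) := continuousOn_id.prodMk (hu.prodMk hv)
  have huv_mem : MapsTo (fun s ↦ (s, u s, v s)) (Icc 0 1) (Icc 0 1 ×ˢ univ) :=
    fun s hs ↦ ⟨hs, mem_univ _⟩
  constructor
  · refine eqOn_zero_of_hammerstein (g := fun s x ↦ f₁ s x (v s)) isCompact_Icc measurableSet_Icc
      hk₁ hm₁ hu (hf₁.comp huv huv_mem) (fun s hs ↦ ?_) (fun s hs x ↦ h1 s hs x (v s)) hsol.1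
    exact (hf₁.comp_continuous (f := fun x ↦ (s, x, v s)) (by fun_prop)
      fun _ ↦ ⟨hs, mem_univ _⟩).continuousAt
  · refine eqOn_zero_of_hammerstein (g := fun s y ↦ f₂ s (u s) y) isCompact_Icc measurableSet_Icc
      hk₂ hm₂ hv (hf₂.comp huv huv_mem) (fun s hs ↦ ?_) (fun s hs y ↦ h2 s hs (u s) y) hsol.2
    exact (hf₂.comp_continuous (f := fun y ↦ (s, u s, y)) (by fun_prop)
      fun _ ↦ ⟨hs, mem_univ _⟩).continuousAt

theorem nonexistence_case1
    (k₁ k₂ : ℝ → ℝ → ℝ) (f₁ f₂ : ℝ → ℝ → ℝ → ℝ) (Φ₁ Φ₂ : ℝ → ℝ)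
    (a₁ b₁ c₁ a₂ b₂ c₂ : ℝ)
    (hk₁ : ContinuousOn (fun p : ℝ × ℝ => k₁ p.1 p.2) (Set.Icc 0 1 ×ˢ Set.Icc 0 1))
    (hk₂ : ContinuousOn (fun p : ℝ × ℝ => k₂ p.1 p.2) (Set.Icc 0 1 ×ˢ Set.Icc 0 1))
    (ha₁ : 0 ≤ a₁) (hab₁ : a₁ ≤ b₁) (hb₁ : b₁ ≤ 1)
    (ha₂ : 0 ≤ a₂) (hab₂ : a₂ ≤ b₂) (hb₂ : b₂ ≤ 1)
    (hc₁ : c₁ ∈ Set.Ioc (0:ℝ) 1) (hc₂ : c₂ ∈ Set.Ioc (0:ℝ) 1)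
    (hΦ₁meas : Measurable Φ₁) (hΦ₂meas : Measurable Φ₂)
    (hΦ₁nn : ∀ s ∈ Set.Icc (0:ℝ) 1, 0 ≤ Φ₁ s) (hΦ₂nn : ∀ s ∈ Set.Icc (0:ℝ) 1, 0 ≤ Φ₂ s)
    (hΦ₁bdd : ∃ C : ℝ, ∀ᵐ s ∂(volume.restrict (Set.Icc (0:ℝ) 1)), |Φ₁ s| ≤ C)
    (hΦ₂bdd : ∃ C : ℝ, ∀ᵐ s ∂(volume.restrict (Set.Icc (0:ℝ) 1)), |Φ₂ s| ≤ C)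
    (hΦ₁pos : 0 < ∫ s in a₁..b₁, Φ₁ s) (hΦ₂pos : 0 < ∫ s in a₂..b₂, Φ₂ s)
    (hub₁ : ∀ t ∈ Set.Icc (0:ℝ) 1, ∀ᵐ s ∂(volume.restrict (Set.Icc (0:ℝ) 1)), |k₁ t s| ≤ Φ₁ s)
    (hub₂ : ∀ t ∈ Set.Icc (0:ℝ) 1, ∀ᵐ s ∂(volume.restrict (Set.Icc (0:ℝ) 1)), |k₂ t s| ≤ Φ₂ s)
    (hlb₁ : ∀ t ∈ Set.Icc a₁ b₁, ∀ᵐ s ∂(volume.restrict (Set.Icc (0:ℝ) 1)), c₁ * Φ₁ s ≤ k₁ t s)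
    (hlb₂ : ∀ t ∈ Set.Icc a₂ b₂, ∀ᵐ s ∂(volume.restrict (Set.Icc (0:ℝ) 1)), c₂ * Φ₂ s ≤ k₂ t s)
    (hf₁ : ContinuousOn (fun p : ℝ × ℝ × ℝ => f₁ p.1 p.2.1 p.2.2)
      (Set.Icc 0 1 ×ˢ (Set.univ : Set (ℝ × ℝ))))
    (hf₂ : ContinuousOn (fun p : ℝ × ℝ × ℝ => f₂ p.1 p.2.1 p.2.2)
      (Set.Icc 0 1 ×ˢ (Set.univ : Set (ℝ × ℝ))))
    (hf₁nn : ∀ t ∈ Set.Icc (0:ℝ) 1, ∀ x y : ℝ, 0 ≤ f₁ t x y)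
    (hf₂nn : ∀ t ∈ Set.Icc (0:ℝ) 1, ∀ x y : ℝ, 0 ≤ f₂ t x y)
    (m₁ m₂ M₁ M₂ : ℝ)
    (hm₁pos : 0 < m₁) (hm₂pos : 0 < m₂)
    (hm₁ : 1 / m₁ = ⨆ t : Set.Icc (0:ℝ) 1, ∫ s in (0:ℝ)..1, |k₁ t.1 s|)
    (hm₂ : 1 / m₂ = ⨆ t : Set.Icc (0:ℝ) 1, ∫ s in (0:ℝ)..1, |k₂ t.1 s|)
    (hM₁pos : 0 < M₁) (hM₂pos : 0 < M₂)
    (hinf₁pos : 0 < ⨅ t : Set.Icc a₁ b₁, ∫ s in a₁..b₁, k₁ t.1 s)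
    (hinf₂pos : 0 < ⨅ t : Set.Icc a₂ b₂, ∫ s in a₂..b₂, k₂ t.1 s)
    (hM₁ : 1 / M₁ = ⨅ t : Set.Icc a₁ b₁, ∫ s in a₁..b₁, k₁ t.1 s)
    (hM₂ : 1 / M₂ = ⨅ t : Set.Icc a₂ b₂, ∫ s in a₂..b₂, k₂ t.1 s)
    (h1 : ∀ t ∈ Set.Icc (0:ℝ) 1, ∀ x y : ℝ, x ≠ 0 → f₁ t x y < m₁ * |x|)
    (h2 : ∀ t ∈ Set.Icc (0:ℝ) 1, ∀ x y : ℝ, y ≠ 0 → f₂ t x y < m₂ * |y|)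
    :
    ¬ ∃ u v : ℝ → ℝ, nontrivialSolution k₁ k₂ f₁ f₂ a₁ b₁ c₁ a₂ b₂ c₂ u v := by
  rintro ⟨u, v, ⟨hu, hv, -, -⟩, hsol, hpos⟩
  obtain ⟨hu₀, hv₀⟩ := nonexistence_case1_general
    (fun t ht ↦ (hk₁.uncurry_left t ht).integrableOn_Icc)
    (fun t ht ↦ (hk₂.uncurry_left t ht).integrableOn_Icc)
    (hm₁ ▸ intervalIntegral_abs_kernel_le_iSup isCompact_Icc zero_le_one hk₁)
    (hm₂ ▸ intervalIntegral_abs_kernel_le_iSup isCompact_Icc zero_le_one hk₂) hf₁ hf₂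
    (fun t ht x y hx ↦ (abs_of_nonneg (hf₁nn t ht x y)).trans_lt (h1 t ht x y hx))
    (fun t ht x y hy ↦ (abs_of_nonneg (hf₂nn t ht x y)).trans_lt (h2 t ht x y hy)) hu hv hsol
  exact hpos.ne' (by rw [supNorm_eq_zero_of_eqOn hu₀, supNorm_eq_zero_of_eqOn hv₀, max_self])
end

section
/- (Non-existence, case (2)) Assume that for each i=1,2 one has f_i(t,u₁,u₂) > M_i u_i for every t ∈ [a_i,b_i] and all (u₁,u₂) ∈ ℝ² with u_i > 0. Then the system (*) has no nontrivial solution in K. -/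
open MeasureTheory Set

/-!
If `u` is a nontrivial component in its cone, then `u` is positive on `[a, b]` and attains its
minimum over `[a, b]` at some `t₀`. On `[a, b]` the nonlinearity exceeds `M * u s ≥ M * u t₀`,
so `u t₀ ≥ ∫ s in a..b, k t₀ s * f s (u s) (v s) > M * u t₀ * ∫ s in a..b, k t₀ s`,
and the last expression is at least `u t₀` because `1 / M` bounds the integral of `k t₀` from below:
a contradiction.
-/

-- An infimum of reals that is not bounded below is `0`, so positivity replaces boundedness.
lemma iInf_le_of_iInf_pos {ι : Type*} {w : ι → ℝ} (h : 0 < ⨅ i, w i) (i : ι) :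
    ⨅ j, w j ≤ w i := by
  refine ciInf_le (not_not.1 fun hw => ?_) i
  exact h.ne' (Real.iInf_of_not_bddBelow hw)

lemma exists_isMinOn_pos_of_infOn_pos {a b : ℝ} {u : ℝ → ℝ} (hab : a ≤ b)
    (hu : ContinuousOn u (Icc a b)) (hpos : 0 < infOn a b u) :
    ∃ t ∈ Icc a b, 0 < u t ∧ IsMinOn u (Icc a b) t := by
  obtain ⟨t, ht, hmin⟩ := isCompact_Icc.exists_isMinOn (nonempty_Icc.2 hab) hu
  exact ⟨t, ht, hpos.trans_le (iInf_le_of_iInf_pos hpos ⟨t, ht⟩), hmin⟩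

section WeightedIntegral

variable {α : Type*} [MeasurableSpace α] {μ : Measure α} {k g : α → ℝ} {r M : ℝ} {S : Set α}

lemma ae_restrict_nonneg_of_mul_le {c : ℝ} (hS : MeasurableSet S) (hc : 0 ≤ c)
    (hg : ∀ x ∈ S, 0 ≤ g x) (hgk : ∀ᵐ x ∂μ.restrict S, c * g x ≤ k x) :
    0 ≤ᵐ[μ.restrict S] k := by
  filter_upwards [hgk, ae_restrict_mem hS] with x hx hxS
  exact (mul_nonneg hc (hg x hxS)).trans hx

lemma mul_integral_lt_integral_mul (hk : 0 ≤ᵐ[μ] k) (hkpos : 0 < ∫ x, k x ∂μ)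
    (hkg : Integrable (fun x => k x * g x) μ) (hrg : ∀ᵐ x ∂μ, r < g x) :
    r * ∫ x, k x ∂μ < ∫ x, k x * g x ∂μ := by
  have hkint : Integrable k μ := .of_integral_ne_zero hkpos.ne'
  have hrk : Integrable (fun x => r * k x) μ := hkint.const_mul r
  have hle : (fun x => r * k x) ≤ᵐ[μ] fun x => k x * g x := by
    filter_upwards [hk, hrg] with x hkx hrx
    rw [mul_comm]
    exact mul_le_mul_of_nonneg_left hrx.le hkx
  rw [← integral_const_mul]
  refine (integral_mono_ae hrk hkg hle).lt_of_ne fun heq => hkpos.ne' ?_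
  have hae : (fun x => r * k x) =ᵐ[μ] fun x => k x * g x :=
    (integral_eq_iff_of_ae_le hrk hkg hle).1 heq
  refine integral_eq_zero_of_ae ?_
  filter_upwards [hae, hrg] with x hx hrx
  have hprod : (g x - r) * k x = 0 := by linear_combination -hx
  exact (mul_eq_zero.1 hprod).resolve_left (sub_pos.2 hrx).ne'

lemma lt_integral_mul_of_one_div_le_setIntegral (hS : MeasurableSet S) (hk : 0 ≤ᵐ[μ] k)
    (hg : 0 ≤ᵐ[μ] g) (hkg : Integrable (fun x => k x * g x) μ) (hM : 0 < M)
    (hkS : 1 / M ≤ ∫ x in S, k x ∂μ) (hr : 0 ≤ r) (hrg : ∀ x ∈ S, M * r < g x) :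
    r < ∫ x, k x * g x ∂μ :=
  calc r = M * r * (1 / M) := by field_simp
    _ ≤ M * r * ∫ x in S, k x ∂μ := by gcongr
    _ < ∫ x in S, k x * g x ∂μ :=
      mul_integral_lt_integral_mul (ae_restrict_of_ae hk) ((one_div_pos.2 hM).trans_le hkS)
        hkg.integrableOn (ae_restrict_of_forall_mem hS hrg)
    _ ≤ ∫ x, k x * g x ∂μ := by
      refine setIntegral_le_integral hkg ?_
      filter_upwards [hk, hg] with x hkx hgx using mul_nonneg hkx hgx

end WeightedIntegral

lemma lt_intervalIntegral_mul_of_one_div_le {k g : ℝ → ℝ} {a b p q r M : ℝ} (ha : p ≤ a)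
    (hab : a ≤ b) (hb : b ≤ q) (hk : 0 ≤ᵐ[volume.restrict (Icc p q)] k)
    (hg : ∀ s ∈ Icc p q, 0 ≤ g s)
    (hkg : IntervalIntegrable (fun s => k s * g s) volume p q) (hM : 0 < M)
    (hkab : 1 / M ≤ ∫ s in a..b, k s) (hr : 0 ≤ r) (hrg : ∀ s ∈ Icc a b, M * r < g s) :
    r < ∫ s in p..q, k s * g s := by
  have hsub : Ioc a b ⊆ Ioc p q := Ioc_subset_Ioc ha hb
  rw [intervalIntegral.integral_of_le (ha.trans (hab.trans hb))]
  refine lt_integral_mul_of_one_div_le_setIntegral (S := Ioc a b) measurableSet_Ioc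
    (ae_restrict_of_ae_restrict_of_subset Ioc_subset_Icc_self hk)
    (ae_restrict_of_forall_mem measurableSet_Ioc fun s hs => hg s (Ioc_subset_Icc_self hs))
    hkg.1 hM ?_ hr fun s hs => hrg s (Ioc_subset_Icc_self hs)
  rwa [Measure.restrict_restrict_of_subset hsub, ← intervalIntegral.integral_of_le hab]

theorem supNorm_nonpos_of_eq_integral {k : ℝ → ℝ → ℝ} {g u : ℝ → ℝ} {a b c M : ℝ}
    (ha : 0 ≤ a) (hab : a ≤ b) (hb : b ≤ 1) (hc : 0 < c)
    (hk : ∀ t ∈ Icc a b, 0 ≤ᵐ[volume.restrict (Icc 0 1)] k t)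
    (hg : ∀ s ∈ Icc (0 : ℝ) 1, 0 ≤ g s) (hM : 0 < M)
    (hkM : 1 / M ≤ ⨅ t : Icc a b, ∫ s in a..b, k t.1 s)
    (hgu : ∀ s ∈ Icc a b, 0 < u s → M * u s < g s) (hu : ContinuousOn u (Icc a b))
    (hcone : c * supNorm u ≤ infOn a b u)
    (hsol : ∀ t ∈ Icc a b, u t = ∫ s in (0 : ℝ)..1, k t s * g s) :
    supNorm u ≤ 0 := by
  by_contra! hpos
  obtain ⟨t₀, ht₀, hut₀, hmin⟩ :=
    exists_isMinOn_pos_of_infOn_pos hab hu ((mul_pos hc hpos).trans_le hcone)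
  have hkt₀ : 1 / M ≤ ∫ s in a..b, k t₀ s :=
    hkM.trans (iInf_le_of_iInf_pos ((one_div_pos.2 hM).trans_le hkM) ⟨t₀, ht₀⟩)
  -- The integral of a non-integrable function is `0`, whereas this one is `u t₀ > 0`.
  have hint : IntervalIntegrable (fun s => k t₀ s * g s) volume 0 1 :=
    intervalIntegral.intervalIntegrable_of_integral_ne_zero (hsol t₀ ht₀ ▸ hut₀.ne')
  have hlow : ∀ s ∈ Icc a b, M * u t₀ < g s := fun s hs =>
    (mul_le_mul_of_nonneg_left (hmin hs) hM.le).trans_lt (hgu s hs (hut₀.trans_le (hmin hs)))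
  have hlt : u t₀ < ∫ s in (0 : ℝ)..1, k t₀ s * g s :=
    lt_intervalIntegral_mul_of_one_div_le ha hab hb (hk t₀ ht₀) hg hint hM hkt₀ hut₀.le hlow
  exact hlt.ne (hsol t₀ ht₀)

theorem nonexistence_case2_general {k₁ k₂ : ℝ → ℝ → ℝ} {f₁ f₂ : ℝ → ℝ → ℝ → ℝ}
    {a₁ b₁ c₁ a₂ b₂ c₂ M₁ M₂ : ℝ}
    (ha₁ : 0 ≤ a₁) (hab₁ : a₁ ≤ b₁) (hb₁ : b₁ ≤ 1)
    (ha₂ : 0 ≤ a₂) (hab₂ : a₂ ≤ b₂) (hb₂ : b₂ ≤ 1) (hc₁ : 0 < c₁) (hc₂ : 0 < c₂)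
    (hk₁ : ∀ t ∈ Icc a₁ b₁, 0 ≤ᵐ[volume.restrict (Icc 0 1)] k₁ t)
    (hk₂ : ∀ t ∈ Icc a₂ b₂, 0 ≤ᵐ[volume.restrict (Icc 0 1)] k₂ t)
    (hf₁ : ∀ t ∈ Icc (0 : ℝ) 1, ∀ x y : ℝ, 0 ≤ f₁ t x y)
    (hf₂ : ∀ t ∈ Icc (0 : ℝ) 1, ∀ x y : ℝ, 0 ≤ f₂ t x y)
    (hM₁pos : 0 < M₁) (hM₂pos : 0 < M₂)
    (hM₁ : 1 / M₁ = ⨅ t : Icc a₁ b₁, ∫ s in a₁..b₁, k₁ t.1 s)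
    (hM₂ : 1 / M₂ = ⨅ t : Icc a₂ b₂, ∫ s in a₂..b₂, k₂ t.1 s)
    (h1 : ∀ t ∈ Icc a₁ b₁, ∀ x y : ℝ, 0 < x → M₁ * x < f₁ t x y)
    (h2 : ∀ t ∈ Icc a₂ b₂, ∀ x y : ℝ, 0 < y → M₂ * y < f₂ t x y) :
    ¬ ∃ u v : ℝ → ℝ, nontrivialSolution k₁ k₂ f₁ f₂ a₁ b₁ c₁ a₂ b₂ c₂ u v := by
  rintro ⟨u, v, ⟨hu, hv, hcu, hcv⟩, ⟨hsu, hsv⟩, hpos⟩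
  have hsub₁ : Icc a₁ b₁ ⊆ Icc 0 1 := Icc_subset_Icc ha₁ hb₁
  have hsub₂ : Icc a₂ b₂ ⊆ Icc 0 1 := Icc_subset_Icc ha₂ hb₂
  have hu0 : supNorm u ≤ 0 :=
    supNorm_nonpos_of_eq_integral ha₁ hab₁ hb₁ hc₁ hk₁ (fun s hs => hf₁ s hs (u s) (v s))
      hM₁pos hM₁.le (fun s hs => h1 s hs (u s) (v s)) (hu.mono hsub₁) hcu
      fun t ht => hsu t (hsub₁ ht)
  have hv0 : supNorm v ≤ 0 :=
    supNorm_nonpos_of_eq_integral ha₂ hab₂ hb₂ hc₂ hk₂ (fun s hs => hf₂ s hs (u s) (v s))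
      hM₂pos hM₂.le (fun s hs => h2 s hs (u s) (v s)) (hv.mono hsub₂) hcv
      fun t ht => hsv t (hsub₂ ht)
  exact (max_le hu0 hv0).not_gt hpos

theorem nonexistence_case2
    (k₁ k₂ : ℝ → ℝ → ℝ) (f₁ f₂ : ℝ → ℝ → ℝ → ℝ) (Φ₁ Φ₂ : ℝ → ℝ)
    (a₁ b₁ c₁ a₂ b₂ c₂ : ℝ)
    (hk₁ : ContinuousOn (fun p : ℝ × ℝ => k₁ p.1 p.2) (Set.Icc 0 1 ×ˢ Set.Icc 0 1))
    (hk₂ : ContinuousOn (fun p : ℝ × ℝ => k₂ p.1 p.2) (Set.Icc 0 1 ×ˢ Set.Icc 0 1))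
    (ha₁ : 0 ≤ a₁) (hab₁ : a₁ ≤ b₁) (hb₁ : b₁ ≤ 1)
    (ha₂ : 0 ≤ a₂) (hab₂ : a₂ ≤ b₂) (hb₂ : b₂ ≤ 1)
    (hc₁ : c₁ ∈ Set.Ioc (0:ℝ) 1) (hc₂ : c₂ ∈ Set.Ioc (0:ℝ) 1)
    (hΦ₁meas : Measurable Φ₁) (hΦ₂meas : Measurable Φ₂)
    (hΦ₁nn : ∀ s ∈ Set.Icc (0:ℝ) 1, 0 ≤ Φ₁ s) (hΦ₂nn : ∀ s ∈ Set.Icc (0:ℝ) 1, 0 ≤ Φ₂ s)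
    (hΦ₁bdd : ∃ C : ℝ, ∀ᵐ s ∂(volume.restrict (Set.Icc (0:ℝ) 1)), |Φ₁ s| ≤ C)
    (hΦ₂bdd : ∃ C : ℝ, ∀ᵐ s ∂(volume.restrict (Set.Icc (0:ℝ) 1)), |Φ₂ s| ≤ C)
    (hΦ₁pos : 0 < ∫ s in a₁..b₁, Φ₁ s) (hΦ₂pos : 0 < ∫ s in a₂..b₂, Φ₂ s)
    (hub₁ : ∀ t ∈ Set.Icc (0:ℝ) 1, ∀ᵐ s ∂(volume.restrict (Set.Icc (0:ℝ) 1)), |k₁ t s| ≤ Φ₁ s)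
    (hub₂ : ∀ t ∈ Set.Icc (0:ℝ) 1, ∀ᵐ s ∂(volume.restrict (Set.Icc (0:ℝ) 1)), |k₂ t s| ≤ Φ₂ s)
    (hlb₁ : ∀ t ∈ Set.Icc a₁ b₁, ∀ᵐ s ∂(volume.restrict (Set.Icc (0:ℝ) 1)), c₁ * Φ₁ s ≤ k₁ t s)
    (hlb₂ : ∀ t ∈ Set.Icc a₂ b₂, ∀ᵐ s ∂(volume.restrict (Set.Icc (0:ℝ) 1)), c₂ * Φ₂ s ≤ k₂ t s)
    (hf₁ : ContinuousOn (fun p : ℝ × ℝ × ℝ => f₁ p.1 p.2.1 p.2.2)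
      (Set.Icc 0 1 ×ˢ (Set.univ : Set (ℝ × ℝ))))
    (hf₂ : ContinuousOn (fun p : ℝ × ℝ × ℝ => f₂ p.1 p.2.1 p.2.2)
      (Set.Icc 0 1 ×ˢ (Set.univ : Set (ℝ × ℝ))))
    (hf₁nn : ∀ t ∈ Set.Icc (0:ℝ) 1, ∀ x y : ℝ, 0 ≤ f₁ t x y)
    (hf₂nn : ∀ t ∈ Set.Icc (0:ℝ) 1, ∀ x y : ℝ, 0 ≤ f₂ t x y)
    (m₁ m₂ M₁ M₂ : ℝ)
    (hm₁pos : 0 < m₁) (hm₂pos : 0 < m₂)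
    (hm₁ : 1 / m₁ = ⨆ t : Set.Icc (0:ℝ) 1, ∫ s in (0:ℝ)..1, |k₁ t.1 s|)
    (hm₂ : 1 / m₂ = ⨆ t : Set.Icc (0:ℝ) 1, ∫ s in (0:ℝ)..1, |k₂ t.1 s|)
    (hM₁pos : 0 < M₁) (hM₂pos : 0 < M₂)
    (hinf₁pos : 0 < ⨅ t : Set.Icc a₁ b₁, ∫ s in a₁..b₁, k₁ t.1 s)
    (hinf₂pos : 0 < ⨅ t : Set.Icc a₂ b₂, ∫ s in a₂..b₂, k₂ t.1 s)
    (hM₁ : 1 / M₁ = ⨅ t : Set.Icc a₁ b₁, ∫ s in a₁..b₁, k₁ t.1 s)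
    (hM₂ : 1 / M₂ = ⨅ t : Set.Icc a₂ b₂, ∫ s in a₂..b₂, k₂ t.1 s)
    (h1 : ∀ t ∈ Set.Icc a₁ b₁, ∀ x y : ℝ, 0 < x → M₁ * x < f₁ t x y)
    (h2 : ∀ t ∈ Set.Icc a₂ b₂, ∀ x y : ℝ, 0 < y → M₂ * y < f₂ t x y)
    :
    ¬ ∃ u v : ℝ → ℝ, nontrivialSolution k₁ k₂ f₁ f₂ a₁ b₁ c₁ a₂ b₂ c₂ u v :=
  nonexistence_case2_general ha₁ hab₁ hb₁ ha₂ hab₂ hb₂ hc₁.1 hc₂.1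
    (fun t ht => ae_restrict_nonneg_of_mul_le measurableSet_Icc hc₁.1.le hΦ₁nn (hlb₁ t ht))
    (fun t ht => ae_restrict_nonneg_of_mul_le measurableSet_Icc hc₂.1.le hΦ₂nn (hlb₂ t ht))
    hf₁nn hf₂nn hM₁pos hM₂pos hM₁ hM₂ h1 h2
end

section
/- (Non-existence, case (3)) Assume that for some i ∈ {1,2} one has f_i(t,u₁,u₂) < m_i |u_i| for every t ∈ [0,1] and all (u₁,u₂) ∈ ℝ² with u_i ≠ 0, and for j ∈ {1,2}, j ≠ i, one has f_j(t,u₁,u₂) > M_j u_j for every t ∈ [a_j,b_j] and all (u₁,u₂) ∈ ℝ² with u_j > 0. Then the system (*) has no nontrivial solution in K. -/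
open MeasureTheory Set

/-!
Freezing the other unknown turns each equation into a scalar one, `u t = ∫ k t s * F s (u s)`. Such
an equation transfers a bound on `F s (u s)` to a bound on `u`: from above in the sup norm, with
factor `1 / m`, and, where the kernel is nonnegative, from below in the minimum over `[a, b]`, with
factor `1 / M`. If `|F s x| < m |x|` for `x ≠ 0`, then `F s 0 = 0` by continuity, and the first
transfer gives `‖u‖ ≤ (1 / m) ‖F(·, u)‖ < ‖u‖` unless `u ≡ 0`. If `M x < F s x` for `x > 0` and
`u ≢ 0` lies in the cone, then `min u > 0` and the second transfer gives
`min u ≥ (1 / M) min F(·, u) > min u`.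
-/

lemma supNorm_nonneg (w : ℝ → ℝ) : 0 ≤ supNorm w :=
  Real.iSup_nonneg fun _ => abs_nonneg _

lemma abs_le_supNorm {w : ℝ → ℝ} (hw : ContinuousOn w (Icc 0 1)) {t : ℝ} (ht : t ∈ Icc (0 : ℝ) 1) :
    |w t| ≤ supNorm w := by
  rw [supNorm, ← sSup_image' (f := fun t => |w t|)]
  exact le_csSup (isCompact_Icc.bddAbove_image hw.abs) (mem_image_of_mem _ ht)

lemma exists_abs_eq_supNorm {w : ℝ → ℝ} (hw : ContinuousOn w (Icc 0 1)) :
    ∃ t ∈ Icc (0 : ℝ) 1, |w t| = supNorm w := by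
  obtain ⟨t, ht, hsup⟩ :=
    isCompact_Icc.exists_sSup_image_eq (nonempty_Icc.2 zero_le_one) hw.abs
  exact ⟨t, ht, by rw [supNorm, ← hsup, sSup_image']⟩

lemma infOn_le {a b : ℝ} {w : ℝ → ℝ} (hw : ContinuousOn w (Icc a b)) {t : ℝ} (ht : t ∈ Icc a b) :
    infOn a b w ≤ w t := by
  rw [infOn, ← sInf_image' (f := w)]
  exact csInf_le (isCompact_Icc.bddBelow_image hw) (mem_image_of_mem _ ht)

lemma exists_eq_infOn {a b : ℝ} (hab : a ≤ b) {w : ℝ → ℝ} (hw : ContinuousOn w (Icc a b)) :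
    ∃ t ∈ Icc a b, w t = infOn a b w := by
  obtain ⟨t, ht, hinf⟩ := isCompact_Icc.exists_sInf_image_eq (nonempty_Icc.2 hab) hw
  exact ⟨t, ht, by rw [infOn, ← hinf, sInf_image']⟩

-- A nonzero real supremum comes from a bounded family: otherwise `⨆` takes the junk value `0`.
lemma le_of_eq_iSup_of_ne_zero {ι : Type*} {S : Set ι} {φ : ι → ℝ} {r : ℝ} (hr : r ≠ 0)
    (hsup : r = ⨆ i : S, φ i) : ∀ i ∈ S, φ i ≤ r := by
  have hbdd : BddAbove (range fun i : S => φ i) := by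
    by_contra hunbdd
    exact hr (hsup.trans (Real.iSup_of_not_bddAbove hunbdd))
  exact fun i hi => hsup ▸ le_ciSup hbdd ⟨i, hi⟩

lemma le_of_eq_iInf_of_ne_zero {ι : Type*} {S : Set ι} {φ : ι → ℝ} {r : ℝ} (hr : r ≠ 0)
    (hinf : r = ⨅ i : S, φ i) : ∀ i ∈ S, r ≤ φ i := by
  have hbdd : BddBelow (range fun i : S => φ i) := by
    by_contra hunbdd
    exact hr (hinf.trans (Real.iInf_of_not_bddBelow hunbdd))
  exact fun i hi => hinf ▸ ciInf_le hbdd ⟨i, hi⟩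

section WeightedIntegrals

variable {α : Type*} [MeasurableSpace α] {μ : Measure α} {k g : α → ℝ} {R : ℝ}

lemma abs_integral_mul_le (hk : Integrable k μ) (hg : ∀ᵐ s ∂μ, |g s| ≤ R) :
    |∫ s, k s * g s ∂μ| ≤ (∫ s, |k s| ∂μ) * R := by
  rw [← integral_mul_const, ← Real.norm_eq_abs]
  refine norm_integral_le_of_norm_le (hk.abs.mul_const R) ?_
  filter_upwards [hg] with s hs
  rw [Real.norm_eq_abs, abs_mul]
  exact mul_le_mul_of_nonneg_left hs (abs_nonneg _)

lemma setIntegral_mul_const_le_setIntegral_mul {S T : Set α} (hS : MeasurableSet S)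
    (hT : MeasurableSet T) (hST : S ⊆ T) (hk : IntegrableOn k T μ)
    (hkg : IntegrableOn (fun s => k s * g s) T μ) (hk_nonneg : ∀ᵐ s ∂μ.restrict T, 0 ≤ k s)
    (hgS : ∀ s ∈ S, R ≤ g s) (hgT : ∀ s ∈ T, 0 ≤ g s) :
    (∫ s in S, k s ∂μ) * R ≤ ∫ s in T, k s * g s ∂μ :=
  calc (∫ s in S, k s ∂μ) * R
    _ = ∫ s in S, k s * R ∂μ := (integral_mul_const R k).symm
    _ ≤ ∫ s in S, k s * g s ∂μ := by
        refine integral_mono_ae ((hk.mono_set hST).mul_const R) (hkg.mono_set hST) ?_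
        filter_upwards [ae_restrict_of_ae_restrict_of_subset hST hk_nonneg, ae_restrict_mem hS]
          with s hks hs
        exact mul_le_mul_of_nonneg_left (hgS s hs) hks
    _ ≤ ∫ s in T, k s * g s ∂μ := by
        refine setIntegral_mono_set hkg ?_ hST.eventuallyLE
        filter_upwards [hk_nonneg, ae_restrict_mem hT] with s hks hs
        exact mul_nonneg hks (hgT s hs)

end WeightedIntegrals

lemma ae_restrict_nonneg_of_mul_le_s11 {α : Type*} [MeasurableSpace α] {μ : Measure α} {S : Set α}
    {k Φ : α → ℝ} {c : ℝ} (hS : MeasurableSet S) (hc : 0 ≤ c) (hΦ : ∀ s ∈ S, 0 ≤ Φ s)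
    (hle : ∀ᵐ s ∂(μ.restrict S), c * Φ s ≤ k s) : ∀ᵐ s ∂(μ.restrict S), 0 ≤ k s := by
  filter_upwards [hle, ae_restrict_mem hS] with s hcΦ hs
  exact (mul_nonneg hc (hΦ s hs)).trans hcΦ

section Superposition

variable {X Y Z W : Type*} [TopologicalSpace X] [TopologicalSpace Y] [TopologicalSpace Z]
  [TopologicalSpace W] {S : Set X}

lemma continuousOn_superposition {F : X → Y → W} {u : X → Y}
    (hF : ContinuousOn (fun p : X × Y => F p.1 p.2) (S ×ˢ univ)) (hu : ContinuousOn u S) :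
    ContinuousOn (fun s => F s (u s)) S :=
  hF.comp (f := fun s => (s, u s)) (continuousOn_id.prodMk hu) fun _ hs => ⟨hs, mem_univ _⟩

lemma continuousOn_freeze_fst {f : X → Y → Z → W} {u : X → Y}
    (hf : ContinuousOn (fun p : X × Y × Z => f p.1 p.2.1 p.2.2) (S ×ˢ univ))
    (hu : ContinuousOn u S) :
    ContinuousOn (fun p : X × Z => f p.1 (u p.1) p.2) (S ×ˢ univ) :=
  hf.comp (f := fun p : X × Z => (p.1, u p.1, p.2))
    (continuousOn_fst.prodMk ((hu.comp continuousOn_fst fun _ hp => hp.1).prodMk continuousOn_snd))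
    fun _ hp => ⟨hp.1, mem_univ _⟩

lemma continuousOn_freeze_snd {f : X → Y → Z → W} {v : X → Z}
    (hf : ContinuousOn (fun p : X × Y × Z => f p.1 p.2.1 p.2.2) (S ×ˢ univ))
    (hv : ContinuousOn v S) :
    ContinuousOn (fun p : X × Y => f p.1 p.2 (v p.1)) (S ×ˢ univ) :=
  hf.comp (f := fun p : X × Y => (p.1, p.2, v p.1))
    (continuousOn_fst.prodMk (continuousOn_snd.prodMk (hv.comp continuousOn_fst fun _ hp => hp.1)))
    fun _ hp => ⟨hp.1, mem_univ _⟩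

end Superposition

lemma continuousOn_section {X Y Z : Type*} [TopologicalSpace X] [TopologicalSpace Y]
    [TopologicalSpace Z] {S : Set X} {T : Set Y} {F : X → Y → Z}
    (hF : ContinuousOn (fun p : X × Y => F p.1 p.2) (S ×ˢ T)) {x : X} (hx : x ∈ S) :
    ContinuousOn (F x) T :=
  hF.comp (f := fun y => (x, y)) (by fun_prop) fun _ hy => ⟨hx, hy⟩

lemma eq_zero_of_abs_le_mul_abs {φ : ℝ → ℝ} {m : ℝ} (hφ : ContinuousAt φ 0)
    (hle : ∀ x ≠ 0, |φ x| ≤ m * |x|) : φ 0 = 0 := by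
  have hbound : Filter.Tendsto (fun x : ℝ => m * |x|) (nhdsWithin 0 {0}ᶜ) (nhds 0) := by
    have hcont : Continuous fun x : ℝ => m * |x| := by fun_prop
    simpa only [abs_zero, mul_zero] using (hcont.tendsto 0).mono_left nhdsWithin_le_nhds
  have hlim : Filter.Tendsto φ (nhdsWithin 0 {0}ᶜ) (nhds 0) :=
    squeeze_zero_norm' (eventually_mem_nhdsWithin.mono hle) hbound
  exact tendsto_nhds_unique (hφ.mono_left nhdsWithin_le_nhds) hlim

/-- `u` solves on `[0, 1]` the scalar Hammerstein equation with kernel `k` and nonlinearity `F`.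
Each equation of (*) takes this form once the other unknown is absorbed into `F`. -/
def IsHammersteinSolution (k F : ℝ → ℝ → ℝ) (u : ℝ → ℝ) : Prop :=
  ∀ t ∈ Icc (0 : ℝ) 1, u t = ∫ s in (0 : ℝ)..1, k t s * F s (u s)

namespace IsHammersteinSolution

variable {k F : ℝ → ℝ → ℝ} {u : ℝ → ℝ}

lemma supNorm_le {A : ℝ} (hsol : IsHammersteinSolution k F u)
    (hg : ContinuousOn (fun s => F s (u s)) (Icc 0 1))
    (hk : ∀ t ∈ Icc (0 : ℝ) 1, IntegrableOn (k t) (Icc 0 1))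
    (hkA : ∀ t ∈ Icc (0 : ℝ) 1, ∫ s in (0 : ℝ)..1, |k t s| ≤ A) :
    supNorm u ≤ A * supNorm fun s => F s (u s) := by
  have : Nonempty (Icc (0 : ℝ) 1) := ⟨0, by simp⟩
  refine ciSup_le fun ⟨t, ht⟩ => ?_
  refine le_trans ?_ (mul_le_mul_of_nonneg_right (hkA t ht) (supNorm_nonneg _))
  rw [hsol t ht, intervalIntegral.integral_of_le zero_le_one,
    intervalIntegral.integral_of_le zero_le_one]
  refine abs_integral_mul_le ((hk t ht).mono_set Ioc_subset_Icc_self) ?_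
  filter_upwards [ae_restrict_mem measurableSet_Ioc] with s hs
  exact abs_le_supNorm hg (Ioc_subset_Icc_self hs)

lemma mul_infOn_le {a b B : ℝ} (hsol : IsHammersteinSolution k F u)
    (ha : 0 ≤ a) (hab : a ≤ b) (hb : b ≤ 1) (hg : ContinuousOn (fun s => F s (u s)) (Icc 0 1))
    (hg_nonneg : ∀ s ∈ Icc (0 : ℝ) 1, 0 ≤ F s (u s))
    (hk : ∀ t ∈ Icc a b, IntegrableOn (k t) (Icc 0 1))
    (hk_nonneg : ∀ t ∈ Icc a b, ∀ᵐ s ∂(volume.restrict (Icc (0 : ℝ) 1)), 0 ≤ k t s)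
    (hkB : ∀ t ∈ Icc a b, B ≤ ∫ s in a..b, k t s) :
    B * infOn a b (fun s => F s (u s)) ≤ infOn a b u := by
  have hsub : Icc a b ⊆ Icc (0 : ℝ) 1 := Icc_subset_Icc ha hb
  have hinf_nonneg : 0 ≤ infOn a b fun s => F s (u s) :=
    Real.iInf_nonneg fun s => hg_nonneg s (hsub s.2)
  have : Nonempty (Icc a b) := (nonempty_Icc.2 hab).to_subtype
  refine le_ciInf fun ⟨t, ht⟩ => (mul_le_mul_of_nonneg_right (hkB t ht) hinf_nonneg).trans ?_
  rw [hsol t (hsub ht), intervalIntegral.integral_of_le zero_le_one,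
    intervalIntegral.integral_of_le hab]
  exact setIntegral_mul_const_le_setIntegral_mul measurableSet_Ioc measurableSet_Ioc
    (Ioc_subset_Ioc ha hb) ((hk t ht).mono_set Ioc_subset_Icc_self)
    (((hk t ht).mul_continuousOn hg isCompact_Icc).mono_set Ioc_subset_Icc_self)
    (ae_restrict_of_ae_restrict_of_subset Ioc_subset_Icc_self (hk_nonneg t ht))
    (fun s hs => infOn_le (hg.mono hsub) (Ioc_subset_Icc_self hs))
    (fun s hs => hg_nonneg s (Ioc_subset_Icc_self hs))

theorem supNorm_eq_zero_of_abs_lt_mul_abs {m : ℝ} (hsol : IsHammersteinSolution k F u)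
    (hu : ContinuousOn u (Icc 0 1))
    (hF : ContinuousOn (fun p : ℝ × ℝ => F p.1 p.2) (Icc 0 1 ×ˢ univ))
    (hk : ∀ t ∈ Icc (0 : ℝ) 1, IntegrableOn (k t) (Icc 0 1)) (hm : 0 < m)
    (hkm : ∀ t ∈ Icc (0 : ℝ) 1, ∫ s in (0 : ℝ)..1, |k t s| ≤ 1 / m)
    (hFlt : ∀ s ∈ Icc (0 : ℝ) 1, ∀ x ≠ 0, |F s x| < m * |x|) : supNorm u = 0 := by
  have hg := continuousOn_superposition hF hu
  have hF_zero : ∀ s ∈ Icc (0 : ℝ) 1, F s 0 = 0 := fun s hs =>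
    eq_zero_of_abs_le_mul_abs ((continuousOn_section hF hs).continuousAt Filter.univ_mem)
      fun x hx => (hFlt s hs x hx).le
  by_contra hne
  have hpos : 0 < supNorm u := (supNorm_nonneg u).lt_of_ne' hne
  have hlt : supNorm (fun s => F s (u s)) < m * supNorm u := by
    obtain ⟨r, hr, hr_max⟩ := exists_abs_eq_supNorm hg
    rw [← hr_max]
    rcases eq_or_ne (u r) 0 with hur | hur
    · rw [hur, hF_zero r hr, abs_zero]
      positivity
    · exact (hFlt r hr _ hur).trans_le (mul_le_mul_of_nonneg_left (abs_le_supNorm hu hr) hm.le)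
  refine lt_irrefl (supNorm u) ?_
  calc supNorm u
    _ ≤ 1 / m * supNorm fun s => F s (u s) := hsol.supNorm_le hg hk hkm
    _ < 1 / m * (m * supNorm u) := mul_lt_mul_of_pos_left hlt (one_div_pos.2 hm)
    _ = supNorm u := by field_simp

theorem supNorm_eq_zero_of_mul_lt {a b c M : ℝ} (hsol : IsHammersteinSolution k F u)
    (hu : ContinuousOn u (Icc 0 1)) (ha : 0 ≤ a) (hab : a ≤ b) (hb : b ≤ 1) (hc : 0 < c)
    (hcone : c * supNorm u ≤ infOn a b u)
    (hF : ContinuousOn (fun p : ℝ × ℝ => F p.1 p.2) (Icc 0 1 ×ˢ univ))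
    (hF_nonneg : ∀ s ∈ Icc (0 : ℝ) 1, ∀ x, 0 ≤ F s x)
    (hk : ∀ t ∈ Icc a b, IntegrableOn (k t) (Icc 0 1))
    (hk_nonneg : ∀ t ∈ Icc a b, ∀ᵐ s ∂(volume.restrict (Icc (0 : ℝ) 1)), 0 ≤ k t s) (hM : 0 < M)
    (hkM : ∀ t ∈ Icc a b, 1 / M ≤ ∫ s in a..b, k t s)
    (hltF : ∀ s ∈ Icc a b, ∀ x > 0, M * x < F s x) : supNorm u = 0 := by
  have hsub : Icc a b ⊆ Icc (0 : ℝ) 1 := Icc_subset_Icc ha hb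
  have hg := continuousOn_superposition hF hu
  by_contra hne
  have hpos : 0 < infOn a b u :=
    (mul_pos hc ((supNorm_nonneg u).lt_of_ne' hne)).trans_le hcone
  have hlt : M * infOn a b u < infOn a b fun s => F s (u s) := by
    obtain ⟨r, hr, hr_min⟩ := exists_eq_infOn hab (hg.mono hsub)
    have hur : infOn a b u ≤ u r := infOn_le (hu.mono hsub) hr
    rw [← hr_min]
    exact (mul_le_mul_of_nonneg_left hur hM.le).trans_lt (hltF r hr _ (hpos.trans_le hur))
  refine lt_irrefl (infOn a b u) ?_
  calc infOn a b u
    _ = 1 / M * (M * infOn a b u) := by field_simp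
    _ < 1 / M * infOn a b (fun s => F s (u s)) := mul_lt_mul_of_pos_left hlt (one_div_pos.2 hM)
    _ ≤ infOn a b u :=
        hsol.mul_infOn_le ha hab hb hg (fun s hs => hF_nonneg s hs _) hk hk_nonneg hkM

end IsHammersteinSolution

theorem nonexistence_case3_general
    {k₁ k₂ : ℝ → ℝ → ℝ} {f₁ f₂ : ℝ → ℝ → ℝ → ℝ} {a₁ b₁ c₁ a₂ b₂ c₂ m₁ m₂ M₁ M₂ : ℝ}
    (hk₁ : ∀ t ∈ Icc (0 : ℝ) 1, IntegrableOn (k₁ t) (Icc 0 1))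
    (hk₂ : ∀ t ∈ Icc (0 : ℝ) 1, IntegrableOn (k₂ t) (Icc 0 1))
    (ha₁ : 0 ≤ a₁) (hab₁ : a₁ ≤ b₁) (hb₁ : b₁ ≤ 1)
    (ha₂ : 0 ≤ a₂) (hab₂ : a₂ ≤ b₂) (hb₂ : b₂ ≤ 1) (hc₁ : 0 < c₁) (hc₂ : 0 < c₂)
    (hk₁_nonneg : ∀ t ∈ Icc a₁ b₁, ∀ᵐ s ∂(volume.restrict (Icc (0 : ℝ) 1)), 0 ≤ k₁ t s)
    (hk₂_nonneg : ∀ t ∈ Icc a₂ b₂, ∀ᵐ s ∂(volume.restrict (Icc (0 : ℝ) 1)), 0 ≤ k₂ t s)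
    (hf₁ : ContinuousOn (fun p : ℝ × ℝ × ℝ => f₁ p.1 p.2.1 p.2.2) (Icc 0 1 ×ˢ univ))
    (hf₂ : ContinuousOn (fun p : ℝ × ℝ × ℝ => f₂ p.1 p.2.1 p.2.2) (Icc 0 1 ×ˢ univ))
    (hf₁_nonneg : ∀ t ∈ Icc (0 : ℝ) 1, ∀ x y, 0 ≤ f₁ t x y)
    (hf₂_nonneg : ∀ t ∈ Icc (0 : ℝ) 1, ∀ x y, 0 ≤ f₂ t x y)
    (hm₁_pos : 0 < m₁) (hm₂_pos : 0 < m₂)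
    (hm₁ : 1 / m₁ = ⨆ t : Icc (0 : ℝ) 1, ∫ s in (0 : ℝ)..1, |k₁ t s|)
    (hm₂ : 1 / m₂ = ⨆ t : Icc (0 : ℝ) 1, ∫ s in (0 : ℝ)..1, |k₂ t s|)
    (hM₁_pos : 0 < M₁) (hM₂_pos : 0 < M₂)
    (hM₁ : 1 / M₁ = ⨅ t : Icc a₁ b₁, ∫ s in a₁..b₁, k₁ t s)
    (hM₂ : 1 / M₂ = ⨅ t : Icc a₂ b₂, ∫ s in a₂..b₂, k₂ t s)
    (h : ((∀ t ∈ Icc (0 : ℝ) 1, ∀ x y, x ≠ 0 → f₁ t x y < m₁ * |x|) ∧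
          (∀ t ∈ Icc a₂ b₂, ∀ x y, 0 < y → M₂ * y < f₂ t x y)) ∨
         ((∀ t ∈ Icc (0 : ℝ) 1, ∀ x y, y ≠ 0 → f₂ t x y < m₂ * |y|) ∧
          (∀ t ∈ Icc a₁ b₁, ∀ x y, 0 < x → M₁ * x < f₁ t x y))) :
    ¬ ∃ u v : ℝ → ℝ, nontrivialSolution k₁ k₂ f₁ f₂ a₁ b₁ c₁ a₂ b₂ c₂ u v := by
  rintro ⟨u, v, ⟨hu, hv, hcone_u, hcone_v⟩, ⟨hsol_u, hsol_v⟩, hpos⟩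
  replace hsol_u : IsHammersteinSolution k₁ (fun s x => f₁ s x (v s)) u := hsol_u
  replace hsol_v : IsHammersteinSolution k₂ (fun s y => f₂ s (u s) y) v := hsol_v
  have hF₁ := continuousOn_freeze_snd hf₁ hv
  have hF₂ := continuousOn_freeze_fst hf₂ hu
  suffices hzero : supNorm u = 0 ∧ supNorm v = 0 from
    hpos.ne' (by rw [hzero.1, hzero.2, max_self])
  rcases h with ⟨hsub, hsuper⟩ | ⟨hsub, hsuper⟩
  · constructor
    · refine hsol_u.supNorm_eq_zero_of_abs_lt_mul_abs hu hF₁ hk₁ hm₁_pos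
        (le_of_eq_iSup_of_ne_zero (one_div_pos.2 hm₁_pos).ne' hm₁) fun s hs x hx => ?_
      exact (abs_of_nonneg (hf₁_nonneg s hs _ _)).trans_lt (hsub s hs x _ hx)
    · exact hsol_v.supNorm_eq_zero_of_mul_lt hv ha₂ hab₂ hb₂ hc₂ hcone_v hF₂
        (fun s hs => hf₂_nonneg s hs _) (fun t ht => hk₂ t (Icc_subset_Icc ha₂ hb₂ ht)) hk₂_nonneg
        hM₂_pos (le_of_eq_iInf_of_ne_zero (one_div_pos.2 hM₂_pos).ne' hM₂)
        fun s hs => hsuper s hs _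
  · constructor
    · exact hsol_u.supNorm_eq_zero_of_mul_lt hu ha₁ hab₁ hb₁ hc₁ hcone_u hF₁
        (fun s hs x => hf₁_nonneg s hs x _) (fun t ht => hk₁ t (Icc_subset_Icc ha₁ hb₁ ht))
        hk₁_nonneg hM₁_pos (le_of_eq_iInf_of_ne_zero (one_div_pos.2 hM₁_pos).ne' hM₁)
        fun s hs x => hsuper s hs x _
    · refine hsol_v.supNorm_eq_zero_of_abs_lt_mul_abs hv hF₂ hk₂ hm₂_pos
        (le_of_eq_iSup_of_ne_zero (one_div_pos.2 hm₂_pos).ne' hm₂) fun s hs y hy => ?_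
      exact (abs_of_nonneg (hf₂_nonneg s hs _ _)).trans_lt (hsub s hs _ y hy)

theorem nonexistence_case3
    (k₁ k₂ : ℝ → ℝ → ℝ) (f₁ f₂ : ℝ → ℝ → ℝ → ℝ) (Φ₁ Φ₂ : ℝ → ℝ)
    (a₁ b₁ c₁ a₂ b₂ c₂ : ℝ)
    (hk₁ : ContinuousOn (fun p : ℝ × ℝ => k₁ p.1 p.2) (Set.Icc 0 1 ×ˢ Set.Icc 0 1))
    (hk₂ : ContinuousOn (fun p : ℝ × ℝ => k₂ p.1 p.2) (Set.Icc 0 1 ×ˢ Set.Icc 0 1))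
    (ha₁ : 0 ≤ a₁) (hab₁ : a₁ ≤ b₁) (hb₁ : b₁ ≤ 1)
    (ha₂ : 0 ≤ a₂) (hab₂ : a₂ ≤ b₂) (hb₂ : b₂ ≤ 1)
    (hc₁ : c₁ ∈ Set.Ioc (0:ℝ) 1) (hc₂ : c₂ ∈ Set.Ioc (0:ℝ) 1)
    (hΦ₁meas : Measurable Φ₁) (hΦ₂meas : Measurable Φ₂)
    (hΦ₁nn : ∀ s ∈ Set.Icc (0:ℝ) 1, 0 ≤ Φ₁ s) (hΦ₂nn : ∀ s ∈ Set.Icc (0:ℝ) 1, 0 ≤ Φ₂ s)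
    (hΦ₁bdd : ∃ C : ℝ, ∀ᵐ s ∂(volume.restrict (Set.Icc (0:ℝ) 1)), |Φ₁ s| ≤ C)
    (hΦ₂bdd : ∃ C : ℝ, ∀ᵐ s ∂(volume.restrict (Set.Icc (0:ℝ) 1)), |Φ₂ s| ≤ C)
    (hΦ₁pos : 0 < ∫ s in a₁..b₁, Φ₁ s) (hΦ₂pos : 0 < ∫ s in a₂..b₂, Φ₂ s)
    (hub₁ : ∀ t ∈ Set.Icc (0:ℝ) 1, ∀ᵐ s ∂(volume.restrict (Set.Icc (0:ℝ) 1)), |k₁ t s| ≤ Φ₁ s)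
    (hub₂ : ∀ t ∈ Set.Icc (0:ℝ) 1, ∀ᵐ s ∂(volume.restrict (Set.Icc (0:ℝ) 1)), |k₂ t s| ≤ Φ₂ s)
    (hlb₁ : ∀ t ∈ Set.Icc a₁ b₁, ∀ᵐ s ∂(volume.restrict (Set.Icc (0:ℝ) 1)), c₁ * Φ₁ s ≤ k₁ t s)
    (hlb₂ : ∀ t ∈ Set.Icc a₂ b₂, ∀ᵐ s ∂(volume.restrict (Set.Icc (0:ℝ) 1)), c₂ * Φ₂ s ≤ k₂ t s)
    (hf₁ : ContinuousOn (fun p : ℝ × ℝ × ℝ => f₁ p.1 p.2.1 p.2.2)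
      (Set.Icc 0 1 ×ˢ (Set.univ : Set (ℝ × ℝ))))
    (hf₂ : ContinuousOn (fun p : ℝ × ℝ × ℝ => f₂ p.1 p.2.1 p.2.2)
      (Set.Icc 0 1 ×ˢ (Set.univ : Set (ℝ × ℝ))))
    (hf₁nn : ∀ t ∈ Set.Icc (0:ℝ) 1, ∀ x y : ℝ, 0 ≤ f₁ t x y)
    (hf₂nn : ∀ t ∈ Set.Icc (0:ℝ) 1, ∀ x y : ℝ, 0 ≤ f₂ t x y)
    (m₁ m₂ M₁ M₂ : ℝ)
    (hm₁pos : 0 < m₁) (hm₂pos : 0 < m₂)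
    (hm₁ : 1 / m₁ = ⨆ t : Set.Icc (0:ℝ) 1, ∫ s in (0:ℝ)..1, |k₁ t.1 s|)
    (hm₂ : 1 / m₂ = ⨆ t : Set.Icc (0:ℝ) 1, ∫ s in (0:ℝ)..1, |k₂ t.1 s|)
    (hM₁pos : 0 < M₁) (hM₂pos : 0 < M₂)
    (hinf₁pos : 0 < ⨅ t : Set.Icc a₁ b₁, ∫ s in a₁..b₁, k₁ t.1 s)
    (hinf₂pos : 0 < ⨅ t : Set.Icc a₂ b₂, ∫ s in a₂..b₂, k₂ t.1 s)
    (hM₁ : 1 / M₁ = ⨅ t : Set.Icc a₁ b₁, ∫ s in a₁..b₁, k₁ t.1 s)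
    (hM₂ : 1 / M₂ = ⨅ t : Set.Icc a₂ b₂, ∫ s in a₂..b₂, k₂ t.1 s)
    (h : ((∀ t ∈ Set.Icc (0:ℝ) 1, ∀ x y : ℝ, x ≠ 0 → f₁ t x y < m₁ * |x|) ∧
          (∀ t ∈ Set.Icc a₂ b₂, ∀ x y : ℝ, 0 < y → M₂ * y < f₂ t x y)) ∨
         ((∀ t ∈ Set.Icc (0:ℝ) 1, ∀ x y : ℝ, y ≠ 0 → f₂ t x y < m₂ * |y|) ∧
          (∀ t ∈ Set.Icc a₁ b₁, ∀ x y : ℝ, 0 < x → M₁ * x < f₁ t x y)))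
    :
    ¬ ∃ u v : ℝ → ℝ, nontrivialSolution k₁ k₂ f₁ f₂ a₁ b₁ c₁ a₂ b₂ c₂ u v := by
  exact nonexistence_case3_general
    (fun t ht => (continuousOn_section hk₁ ht).integrableOn_Icc)
    (fun t ht => (continuousOn_section hk₂ ht).integrableOn_Icc)
    ha₁ hab₁ hb₁ ha₂ hab₂ hb₂ hc₁.1 hc₂.1
    (fun t ht => ae_restrict_nonneg_of_mul_le_s11 measurableSet_Icc hc₁.1.le hΦ₁nn (hlb₁ t ht))
    (fun t ht => ae_restrict_nonneg_of_mul_le_s11 measurableSet_Icc hc₂.1.le hΦ₂nn (hlb₂ t ht))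
    hf₁ hf₂ hf₁nn hf₂nn hm₁pos hm₂pos hm₁ hm₂ hM₁pos hM₂pos hM₁ hM₂ h
end

section
/- Let 1 < α ≤ 2, β > 0, 0 ≤ η ≤ 1 with βΓ(α) < (1−η)^{α−1}, and let b satisfy η ≤ b < 1 and βΓ(α) > (b−η)^{α−1}. Define k(t,s) = β + 1_{{s≤η}}(η−s)^{α−1}/Γ(α) − 1_{{s≤t}}(t−s)^{α−1}/Γ(α), Φ(s) = (1−η)^{α−1}/Γ(α) − β for s > η, Φ(s) = β + (η−s)^{α−1}/Γ(α) for s ≤ η, and c = min{ (βΓ(α) − (b−η)^{α−1})/((1−η)^{α−1} − βΓ(α)), (βΓ(α) − (b−η)^{α−1})/(βΓ(α) + η^{α−1}) }. Then c ∈ (0,1] and k(t,s) ≥ c·Φ(s) for all t ∈ [0,b] and almost every s ∈ [0,1]. -/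
open MeasureTheory Set Real

/-!
The function `φ x = x ^ (α - 1) / Γ(α)` is nondecreasing and, because `α - 1 ≤ 1`, subadditive on
`[0, ∞)`. These two properties alone separate `k(t, s)` from `c Φ(s)` by the constant
`β - φ(b - η)`. When `s ≤ t ≤ b`, the subtracted term `φ(t - s)` is at most
`φ((b - η) + (η - s)) ≤ φ(b - η) + φ(η - s)` for `s ≤ η`, and at most `φ(b - η)` for `s > η`, so
`k(t, s) ≥ β - φ(b - η)`. On the other side `Φ(s)` is at most `β + φ(η)` or equal to
`φ(1 - η) - β`, and `c` is the largest constant whose products with both of these are at most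
`β - φ(b - η)`.
-/

/-- Nondecreasing and subadditive on `[0, ∞)`: the properties of the fractional kernel
`x ^ (α - 1) / Γ(α)`, `1 ≤ α ≤ 2`, on which the lower bound rests. Nothing is asked of the values of
`φ` at negative arguments. -/
structure IsMonotoneSubadditive (φ : ℝ → ℝ) : Prop where
  monotoneOn : MonotoneOn φ (Ici 0)
  map_add_le : ∀ ⦃x y : ℝ⦄, 0 ≤ x → 0 ≤ y → φ (x + y) ≤ φ x + φ y

/-- The Green's kernel `k(t, s)` of the three-point problem, with `φ x` in place of
`x ^ (α - 1) / Γ(α)`. -/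
noncomputable def greenKernel (φ : ℝ → ℝ) (β η t s : ℝ) : ℝ :=
  β + (if s ≤ η then φ (η - s) else 0) - (if s ≤ t then φ (t - s) else 0)

/-- The comparison function `Φ(s)` of the three-point problem, with `φ x` in place of
`x ^ (α - 1) / Γ(α)` and a free parameter `M` in place of `φ (1 - η)`. -/
noncomputable def comparisonFun (φ : ℝ → ℝ) (β η M s : ℝ) : ℝ :=
  if s ≤ η then β + φ (η - s) else M - β

/-- The constant `c` in `k(t, s) ≥ c Φ(s)`. With `φ x = x ^ (α - 1) / Γ(α)` and `M = φ (1 - η)`, the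
paper's fractions are these with numerator and denominator multiplied by `Γ(α)`. -/
noncomputable def comparisonConst (φ : ℝ → ℝ) (β η b M : ℝ) : ℝ :=
  min ((β - φ (b - η)) / (M - β)) ((β - φ (b - η)) / (β + φ η))

theorem isMonotoneSubadditive_rpow {p : ℝ} (hp₀ : 0 ≤ p) (hp₁ : p ≤ 1) :
    IsMonotoneSubadditive (fun x ↦ x ^ p) where
  monotoneOn := monotoneOn_rpow_Ici_of_exponent_nonneg hp₀
  map_add_le _ _ hx hy := rpow_add_le_add_rpow hx hy hp₀ hp₁

namespace IsMonotoneSubadditive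

variable {φ : ℝ → ℝ} {β η b M s t x : ℝ}

theorem div_const (hφ : IsMonotoneSubadditive φ) {a : ℝ} (ha : 0 ≤ a) :
    IsMonotoneSubadditive (fun x ↦ φ x / a) where
  monotoneOn _ hx _ hy hxy := div_le_div_of_nonneg_right (hφ.monotoneOn hx hy hxy) ha
  map_add_le _ _ hx hy := by
    simpa only [add_div] using div_le_div_of_nonneg_right (hφ.map_add_le hx hy) ha

theorem nonneg (hφ : IsMonotoneSubadditive φ) (hx : 0 ≤ x) : 0 ≤ φ x := by
  have h_zero : 0 ≤ φ 0 := by simpa using hφ.map_add_le le_rfl le_rfl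
  exact h_zero.trans (hφ.monotoneOn self_mem_Ici hx hx)

theorem map_sub_le_add (hφ : IsMonotoneSubadditive φ) (hsη : s ≤ η) (hηb : η ≤ b)
    (hst : s ≤ t) (htb : t ≤ b) : φ (t - s) ≤ φ (b - η) + φ (η - s) :=
  calc
    φ (t - s) ≤ φ ((b - η) + (η - s)) :=
      hφ.monotoneOn (sub_nonneg.2 hst)
        (add_nonneg (sub_nonneg.2 hηb) (sub_nonneg.2 hsη)) (by linarith)
    _ ≤ φ (b - η) + φ (η - s) := hφ.map_add_le (sub_nonneg.2 hηb) (sub_nonneg.2 hsη)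

theorem sub_le_greenKernel (hφ : IsMonotoneSubadditive φ) (hηb : η ≤ b) (htb : t ≤ b) :
    β - φ (b - η) ≤ greenKernel φ β η t s := by
  have hb : 0 ≤ φ (b - η) := hφ.nonneg (sub_nonneg.2 hηb)
  unfold greenKernel
  split_ifs with hsη hst hst
  · linarith [hφ.map_sub_le_add hsη hηb hst htb]
  · linarith [hφ.nonneg (sub_nonneg.2 hsη)]
  · have : φ (t - s) ≤ φ (b - η) :=
      hφ.monotoneOn (sub_nonneg.2 hst) (sub_nonneg.2 hηb) (by linarith)
    linarith
  · linarith

theorem comparisonFun_le_max (hφ : IsMonotoneSubadditive φ) (hs : 0 ≤ s) :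
    comparisonFun φ β η M s ≤ max (M - β) (β + φ η) := by
  unfold comparisonFun
  split_ifs with hsη
  · have : φ (η - s) ≤ φ η :=
      hφ.monotoneOn (sub_nonneg.2 hsη) (hs.trans hsη) (sub_le_self η hs)
    exact le_max_of_le_right (by gcongr)
  · exact le_max_left _ _

theorem comparisonConst_mem_Ioc (hφ : IsMonotoneSubadditive φ) (hη : 0 ≤ η) (hηb : η ≤ b)
    (hb : φ (b - η) < β) (hM : β < M) : comparisonConst φ β η b M ∈ Ioc 0 1 := by
  have hφη : 0 ≤ φ η := hφ.nonneg hη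
  have hφb : 0 ≤ φ (b - η) := hφ.nonneg (sub_nonneg.2 hηb)
  have h_den : 0 < β + φ η := by linarith
  refine ⟨lt_min (div_pos (sub_pos.2 hb) (sub_pos.2 hM)) (div_pos (sub_pos.2 hb) h_den),
    (min_le_right _ _).trans ?_⟩
  rw [div_le_one h_den]
  linarith

end IsMonotoneSubadditive

theorem comparisonConst_div_const (φ : ℝ → ℝ) (β η b M : ℝ) {a : ℝ} (ha : a ≠ 0) :
    comparisonConst (fun x ↦ φ x / a) β η b (M / a) =
      min ((β * a - φ (b - η)) / (M - β * a)) ((β * a - φ (b - η)) / (β * a + φ η)) := by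
  simp only [comparisonConst, sub_div' ha, div_sub' ha, add_div' _ _ _ ha,
    div_div_div_cancel_right₀ ha, mul_comm a β]

theorem min_div_mul_max_le {δ u v : ℝ} (hu : 0 < u) (hv : 0 < v) :
    min (δ / u) (δ / v) * max u v ≤ δ := by
  rcases max_choice u v with h | h <;> rw [h]
  · exact (le_div_iff₀ hu).1 (min_le_left _ _)
  · exact (le_div_iff₀ hv).1 (min_le_right _ _)

theorem kernel_lower_bound_general {φ : ℝ → ℝ} {β η b M : ℝ} (hφ : IsMonotoneSubadditive φ)
    (hη : 0 ≤ η) (hηb : η ≤ b) (hb : φ (b - η) < β) (hM : β < M) :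
    comparisonConst φ β η b M ∈ Ioc 0 1 ∧
      ∀ t ≤ b, ∀ s ≥ 0,
        comparisonConst φ β η b M * comparisonFun φ β η M s ≤ greenKernel φ β η t s := by
  have hc := hφ.comparisonConst_mem_Ioc hη hηb hb hM
  have h_den : 0 < β + φ η := by linarith [hφ.nonneg hη, hφ.nonneg (sub_nonneg.2 hηb)]
  refine ⟨hc, fun t htb s hs ↦ ?_⟩
  calc
    comparisonConst φ β η b M * comparisonFun φ β η M s
        ≤ comparisonConst φ β η b M * max (M - β) (β + φ η) :=
      mul_le_mul_of_nonneg_left (hφ.comparisonFun_le_max hs) hc.1.le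
    _ ≤ β - φ (b - η) := min_div_mul_max_le (sub_pos.2 hM) h_den
    _ ≤ greenKernel φ β η t s := hφ.sub_le_greenKernel hηb htb

theorem kernel_lower_bound (α β η b c : ℝ) (hα1 : 1 < α) (hα2 : α ≤ 2) (hβ : 0 < β)
    (hη : η ∈ Set.Icc (0:ℝ) 1) (hβη : β * Real.Gamma α < (1 - η) ^ (α - 1))
    (hηb : η ≤ b) (hb1 : b < 1) (hβb : (b - η) ^ (α - 1) < β * Real.Gamma α)
    (k : ℝ → ℝ → ℝ) (Φ : ℝ → ℝ)
    (hk : ∀ t s : ℝ, k t s =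
      β + (if s ≤ η then (η - s) ^ (α - 1) / Real.Gamma α else 0) -
        (if s ≤ t then (t - s) ^ (α - 1) / Real.Gamma α else 0))
    (hΦ : ∀ s : ℝ, Φ s =
      if s ≤ η then β + (η - s) ^ (α - 1) / Real.Gamma α
      else (1 - η) ^ (α - 1) / Real.Gamma α - β)
    (hc : c = min
      ((β * Real.Gamma α - (b - η) ^ (α - 1)) / ((1 - η) ^ (α - 1) - β * Real.Gamma α))
      ((β * Real.Gamma α - (b - η) ^ (α - 1)) / (β * Real.Gamma α + η ^ (α - 1)))) :
    (0 < c ∧ c ≤ 1) ∧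
      ∀ t ∈ Set.Icc (0:ℝ) b,
        ∀ᵐ s ∂(volume.restrict (Set.Icc (0:ℝ) 1)), c * Φ s ≤ k t s := by
  have hΓ : 0 < Real.Gamma α := Gamma_pos_of_pos (by linarith)
  have hφ := (isMonotoneSubadditive_rpow (p := α - 1) (by linarith) (by linarith)).div_const hΓ.le
  obtain ⟨hc_mem, h_le⟩ := kernel_lower_bound_general hφ hη.1 hηb ((div_lt_iff₀ hΓ).2 hβb)
    ((lt_div_iff₀ hΓ).2 hβη)
  rw [comparisonConst_div_const (fun x ↦ x ^ (α - 1)) β η b _ hΓ.ne', ← hc] at hc_mem h_le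
  refine ⟨hc_mem, fun t ht ↦ ?_⟩
  filter_upwards [ae_restrict_mem measurableSet_Icc] with s hs
  rw [hk, hΦ]
  exact h_le t ht.2 s hs.1
end
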